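/- Let n ≥ 2, 1 ≤ m ≤ n−1, a = (a_1,…,a_n) ∈ ℂ^n and a' = (a'_1,…,a'_m) ∈ ℂ^m with every a_j and a'_k purely imaginary, and let s ∈ ℂ with Re(s) > 0. Then I_{n,m;a,a'}(s) = (2^m/(2πi)^{n−2})·∫_{s_1,…,s_{m−1}, s_{m+1},…,s_{n−1}} U_{n,a}(s−s_1, 2s−s_2, …, (m−1)s−s_{m−1}, m·s+|a'|, s_{m+1},…,s_{n−1})·U_{m,a'}(s_1,…,s_{m−1}) ds_1⋯ds_{m−1}·ds_{m+1}⋯ds_{n−1}. -/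

import Mathlib

open MeasureTheory Complex

noncomputable section

/-- `Γ_ℝ(s) = π^{-s/2} Γ(s/2)`. -/
def GammaR (s : ℂ) : ℂ := (Real.pi : ℂ) ^ (-s / 2) * Complex.Gamma (s / 2)

/-- Modified Bessel function of the second kind, via its integral representation. -/
def BesselK (ν : ℂ) (y : ℝ) : ℂ :=
  (1 / 2) * ∫ t in Set.Ioi (0 : ℝ),
    Complex.exp (-((y : ℂ) / 2) * ((t : ℂ) + 1 / (t : ℂ))) * (t : ℂ) ^ ν / (t : ℂ)

/-- Extend a finite real tuple to `ℕ`, defaulting to `1`. -/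
def extR {k : ℕ} (t : Fin k → ℝ) : ℕ → ℝ := fun i => if h : i < k then t ⟨i, h⟩ else 1

/-- Extend a finite real tuple to `ℕ`, defaulting to `0`. -/
def extR0 {k : ℕ} (t : Fin k → ℝ) : ℕ → ℝ := fun i => if h : i < k then t ⟨i, h⟩ else 0

/-- The positive orthant. -/
def posSet (k : ℕ) : Set (Fin k → ℝ) := {t | ∀ j, 0 < t j}

/-- `|a| = a_1 + ⋯ + a_n` (0-based indexing). -/
def sumA (n : ℕ) (a : ℕ → ℂ) : ℂ := ∑ j ∈ Finset.range n, a j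

/-- `ã_j = a_{j+1} + a_1/(n-1)` (0-based indexing). -/
def tildeA (n : ℕ) (a : ℕ → ℂ) : ℕ → ℂ := fun j => a (j + 1) + a 0 / ((n : ℂ) - 1)

/-- The normalized radial part `Ŵ^A_{n,a}` of the class one `GL_n(ℝ)` Whittaker function,
as a function of `(y_1,…,y_{n-1})` (0-based indexing). -/
def WhittAr : ℕ → (ℕ → ℂ) → (ℕ → ℝ) → ℂ
  | 0, _, _ => 1
  | 1, _, _ => 1
  | 2, a, y => 2 * ((y 0 : ℂ) ^ ((a 0 + a 1) / 2)) *
      BesselK ((a 0 - a 1) / 2) (2 * Real.pi * y 0)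
  | (n + 3), a, y =>
      ∫ t in posSet (n + 2),
        WhittAr (n + 2) (tildeA (n + 3) a)
            (fun j => y (j + 1) * Real.sqrt (extR t (j + 1) / extR t j)) *
          (∏ j ∈ Finset.range (n + 2),
            Complex.exp (((-(Real.pi * y j) ^ 2 * extR t j - 1 / extR t j : ℝ) : ℂ)) *
              ((Real.pi * y j : ℝ) : ℂ) ^ ((((n + 2 - j : ℕ) : ℂ) * a 0) / ((n + 2 : ℕ) : ℂ)) *
              ((extR t j : ℝ) : ℂ) ^ ((((n + 3 : ℕ) : ℂ) * a 0) / (2 * ((n + 2 : ℕ) : ℂ)))) *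
          ((Real.pi * extR t (n + 1) : ℝ) : ℂ) ^ (-(sumA (n + 3) a) / 2) *
          (∏ j ∈ Finset.range (n + 2), ((extR t j : ℝ) : ℂ))⁻¹

/-- `Ŵ^A_{n,a}` as a function of the full tuple `(y_1,…,y_n)`. -/
def WhittAhat (n : ℕ) (a : ℕ → ℂ) (y : ℕ → ℝ) : ℂ :=
  ((y (n - 1) : ℝ) : ℂ) ^ sumA n a * WhittAr n a y

/-- The Mellin transform `U_{n,a}` (0-based: `s j` stands for `s_{j+1}`). -/
def Ufun (n : ℕ) (a : ℕ → ℂ) (s : ℕ → ℂ) : ℂ :=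
  ∫ y in posSet (n - 1),
    WhittAr n a (extR y) *
      ∏ j ∈ Finset.range (n - 1), ((extR y j : ℝ) : ℂ) ^ s j / ((extR y j : ℝ) : ℂ)

/-- The normalized radial part `Ŵ^B_{n,b}` of the class one `SO_{2n+1}(ℝ)` Whittaker function. -/
def WhittBr : ℕ → (ℕ → ℂ) → (ℕ → ℝ) → ℂ
  | 0, _, _ => 1
  | 1, b, y => 2 * BesselK (b 0 / 2) (2 * Real.pi * y 0)
  | (n + 2), b, y =>
      ∫ p in (posSet (n + 2) ×ˢ posSet (n + 1)),
        WhittBr (n + 1) b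
            (fun j =>
              if j < n then
                y (j + 1) *
                  Real.sqrt (extR p.1 (j + 1) * extR p.2 (j + 1) /
                    (extR p.1 (j + 2) * extR p.2 j))
              else y (n + 1) * Real.sqrt (extR p.1 (n + 1) / extR p.2 n)) *
          (∏ j ∈ Finset.range (n + 2),
            Complex.exp (((-(Real.pi * y j) ^ 2 * extR p.1 j - 1 / extR p.1 j : ℝ) : ℂ)) *
              ((Real.pi * y j : ℝ) : ℂ) ^ b (n + 1)) *
          (∏ j ∈ Finset.range (n + 1),
            Complex.exp (((-(Real.pi * y j) ^ 2 * (extR p.1 j / extR p.1 (j + 1)) * extR p.2 j -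
                  1 / extR p.2 j : ℝ) : ℂ)) *
              ((extR p.1 (j + 1) * extR p.2 j : ℝ) : ℂ) ^ (b (n + 1) / 2)) *
          ((extR p.1 0 : ℝ) : ℂ) ^ b (n + 1) *
          (∏ j ∈ Finset.range (n + 1), ((extR p.2 j : ℝ) : ℂ))⁻¹ *
          (∏ j ∈ Finset.range (n + 2), ((extR p.1 j : ℝ) : ℂ))⁻¹

/-- The Mellin transform `V_{n,b}` (0-based: `s j` stands for `s_{j+1}`). -/
def Vfun (n : ℕ) (b : ℕ → ℂ) (s : ℕ → ℂ) : ℂ :=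
  ∫ y in posSet n,
    WhittBr n b (extR y) *
      ∏ j ∈ Finset.range n, ((extR y j : ℝ) : ℂ) ^ s j / ((extR y j : ℝ) : ℂ)

/-- Integral over the vertical line `Re z = c`, i.e. `i·∫_ℝ f(c+it) dt`. -/
def VInt (c : ℝ) (f : ℂ → ℂ) : ℂ := Complex.I * ∫ t : ℝ, f (c + t * Complex.I)

/-- Iterated integral over `k` vertical lines with abscissas `c 0, …, c (k-1)`;
the integrand is fed the contour points as a 0-based sequence. -/
def VIntK (k : ℕ) (c : ℕ → ℝ) (f : (ℕ → ℂ) → ℂ) : ℂ :=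
  Complex.I ^ k * ∫ t : Fin k → ℝ, f (fun i => (c i : ℂ) + (extR0 t i : ℝ) * Complex.I)



/-- The archimedean `GL_n × GL_m` zeta integral (`m < n`) in torus coordinates. -/
def zetaGLm (n m : ℕ) (a a' : ℕ → ℂ) (s : ℂ) : ℂ :=
  (2 : ℂ) ^ m * ∫ y in posSet m,
    WhittAhat n a (extR y) * WhittAhat m a' (extR y) *
      ∏ j ∈ Finset.range m,
        ((extR y j : ℝ) : ℂ) ^ (((j + 1 : ℕ) : ℂ) * s) / ((extR y j : ℝ) : ℂ)

/-- The logarithmic change of variables on the positive orthant. -/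
theorem integral_posSet_eq_integral_exp {k : ℕ} (f : (Fin k → ℝ) → ℂ) :
    ∫ t in posSet k, f t =
      ∫ x : Fin k → ℝ, (∏ j, (Real.exp (x j) : ℂ)) * f (fun j => Real.exp (x j)) := by
  have himg : (fun (x : Fin k → ℝ) j => Real.exp (x j)) '' Set.univ = posSet k := by
    ext t
    simp only [Set.image_univ, Set.mem_range, posSet, Set.mem_ofPred_eq]
    constructor
    · rintro ⟨x, rfl⟩ j
      exact Real.exp_pos _
    · intro h
      exact ⟨fun j => Real.log (t j), funext fun j => Real.exp_log (h j)⟩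
  have hder : ∀ x ∈ (Set.univ : Set (Fin k → ℝ)),
      HasFDerivWithinAt (fun (x : Fin k → ℝ) j => Real.exp (x j))
        (ContinuousLinearMap.pi fun j =>
          (Real.exp (x j) • (ContinuousLinearMap.id ℝ ℝ)).comp
            (ContinuousLinearMap.proj (R := ℝ) (φ := fun _ : Fin k => ℝ) j))
        Set.univ x := by
    intro x _
    refine (hasFDerivAt_pi.2 fun j => ?_).hasFDerivWithinAt
    have h := (Real.hasDerivAt_exp (x j)).hasFDerivAt.comp x
      (hasFDerivAt_apply (𝕜 := ℝ) j x)
    refine h.congr_fderiv ?_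
    apply ContinuousLinearMap.ext
    intro v
    simp [mul_comm]
  have hinj : Set.InjOn (fun (x : Fin k → ℝ) j => Real.exp (x j)) Set.univ := by
    intro x _ y _ h
    funext j
    exact Real.exp_injective (congrFun h j)
  rw [← himg, integral_image_eq_integral_abs_det_fderiv_smul volume MeasurableSet.univ hder hinj,
    Measure.restrict_univ]
  refine integral_congr_ae (Filter.Eventually.of_forall fun x => ?_)
  have hdet : (ContinuousLinearMap.pi fun j =>
          (Real.exp (x j) • (ContinuousLinearMap.id ℝ ℝ)).comp
            (ContinuousLinearMap.proj (R := ℝ) (φ := fun _ : Fin k => ℝ) j)).det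
      = ∏ j, Real.exp (x j) := by
    rw [ContinuousLinearMap.det_pi]
    refine Finset.prod_congr rfl fun j _ => ?_
    simp [ContinuousLinearMap.det]
  simp only [hdet]
  rw [abs_of_nonneg (Finset.prod_nonneg fun j _ => (Real.exp_pos _).le), real_smul]
  push_cast
  rfl

theorem WhittAr_congr : ∀ (n : ℕ) (a : ℕ → ℂ) {y y' : ℕ → ℝ},
    (∀ j, j + 1 < n → y j = y' j) → WhittAr n a y = WhittAr n a y'
  | 0, _, _, _, _ => by simp only [WhittAr]
  | 1, _, _, _, _ => by simp only [WhittAr]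
  | 2, _, _, _, h => by simp only [WhittAr, h 0 (by norm_num)]
  | n + 3, a, y, y', h => by
    simp only [WhittAr]
    congr 1
    funext t
    congr 2
    congr 1
    · refine WhittAr_congr (n + 2) _ fun j hj => ?_
      rw [h (j + 1) (by omega)]
    · refine Finset.prod_congr rfl fun j hj => ?_
      rw [h j (by have := Finset.mem_range.1 hj; omega)]

/-- The function `Ŵ^A_{k+1,a}` in logarithmic coordinates. -/
def logWhitt (k : ℕ) (a : ℕ → ℂ) (x : Fin k → ℝ) : ℂ :=
  WhittAr (k + 1) a (extR fun j => Real.exp (x j))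

theorem WhittAr_eq_logWhitt (k : ℕ) (a : ℕ → ℂ) (y : ℕ → ℝ) (x : Fin k → ℝ)
    (h : ∀ j : Fin k, y j = Real.exp (x j)) : WhittAr (k + 1) a y = logWhitt k a x := by
  refine WhittAr_congr _ _ fun j hj => ?_
  have hj' : j < k := by omega
  simpa [extR, hj'] using h ⟨j, hj'⟩

theorem extR_coe {k : ℕ} (t : Fin k → ℝ) (j : Fin k) : extR t j = t j := by
  simp [extR]

theorem ofReal_exp_cpow (x : ℝ) (c : ℂ) : ((Real.exp x : ℝ) : ℂ) ^ c = cexp (c * x) := by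
  rw [Complex.cpow_def_of_ne_zero (by exact_mod_cast (Real.exp_pos _).ne'),
    ← Complex.ofReal_log (Real.exp_pos _).le, Real.log_exp, mul_comm]

theorem ofReal_exp_ne_zero (x : ℝ) : ((Real.exp x : ℝ) : ℂ) ≠ 0 := by
  exact_mod_cast (Real.exp_pos _).ne'

theorem Ufun_eq_integral_logWhitt (k : ℕ) (a S : ℕ → ℂ) :
    Ufun (k + 1) a S = ∫ x : Fin k → ℝ, logWhitt k a x * cexp (∑ j : Fin k, S j * x j) := by
  change ∫ y in posSet k, WhittAr (k + 1) a (extR y) *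
    ∏ j ∈ Finset.range k, ((extR y j : ℝ) : ℂ) ^ S j / ((extR y j : ℝ) : ℂ) = _
  rw [integral_posSet_eq_integral_exp]
  refine integral_congr_ae (Filter.Eventually.of_forall fun x => ?_)
  simp only [Finset.prod_range, extR_coe]
  rw [mul_left_comm, ← Finset.prod_mul_distrib, Complex.exp_sum, logWhitt]
  congr 1
  refine Finset.prod_congr rfl fun j _ => ?_
  rw [mul_div_cancel₀ _ (ofReal_exp_ne_zero _), ofReal_exp_cpow]

theorem zetaGLm_eq_integral_logWhitt (p K : ℕ) (hpK : p + 1 ≤ K) (a a' : ℕ → ℂ) (s : ℂ) :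
    zetaGLm (K + 1) (p + 1) a a' s = (2 : ℂ) ^ (p + 1) * ∫ x : Fin (p + 1) → ℝ,
      logWhitt K a (fun j => extR0 x j) * logWhitt p a' (fun j => x j.castSucc) *
        cexp (sumA (p + 1) a' * x (Fin.last p) + ∑ j : Fin (p + 1), ((j + 1 : ℕ) : ℂ) * s * x j) := by
  unfold zetaGLm
  rw [integral_posSet_eq_integral_exp]
  congr 1
  refine integral_congr_ae (Filter.Eventually.of_forall fun x => ?_)
  simp only [Finset.prod_range, extR_coe, WhittAhat, Nat.add_sub_cancel]
  have h1 : ((extR (fun j => Real.exp (x j)) K : ℝ) : ℂ) ^ sumA (K + 1) a = 1 := by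
    have : ¬ K < p + 1 := by omega
    simp [extR, this]
  have h2 : extR (fun j => Real.exp (x j)) p = Real.exp (x (Fin.last p)) :=
    extR_coe (fun j => Real.exp (x j)) (Fin.last p)
  rw [h1, h2, ofReal_exp_cpow, Complex.exp_add, Complex.exp_sum,
    WhittAr_eq_logWhitt K a _ (fun j => extR0 x j), WhittAr_eq_logWhitt p a' _
      (fun j => x j.castSucc), mul_left_comm, ← Finset.prod_mul_distrib]
  · have : ∀ j : Fin (p + 1), ((Real.exp (x j) : ℝ) : ℂ) *
        (((Real.exp (x j) : ℝ) : ℂ) ^ (((j + 1 : ℕ) : ℂ) * s) / ((Real.exp (x j) : ℝ) : ℂ)) =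
        cexp (((j + 1 : ℕ) : ℂ) * s * x j) := fun j => by
      rw [mul_div_cancel₀ _ (ofReal_exp_ne_zero _), ofReal_exp_cpow]
    simp only [this]
    ring
  · intro j
    exact extR_coe (fun j => Real.exp (x j)) j.castSucc
  · intro j
    by_cases hj : (j : ℕ) < p + 1 <;> simp [extR, extR0, hj]

/-- The kernel of the recursion for Whittaker functions in logarithmic coordinates. -/
def whitKer (k : ℕ) (Ψ : (Fin k → ℝ) → ℂ) (B : Fin (k + 1) → ℂ) (x τ : Fin (k + 1) → ℝ) : ℂ :=
  Ψ (fun j => x j.succ + (τ j.succ - τ j.castSucc) / 2) *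
    ∏ j, cexp (((-(Real.pi ^ 2 * Real.exp (2 * x j + τ j)) - Real.exp (-τ j) : ℝ) : ℂ) + B j * τ j)

/-- One step of the recursion for Whittaker functions in logarithmic coordinates. -/
def whitStep (k : ℕ) (Ψ : (Fin k → ℝ) → ℂ) (κ : ℂ) (A B : Fin (k + 1) → ℂ)
    (x : Fin (k + 1) → ℝ) : ℂ :=
  κ * cexp (∑ j, A j * x j) * ∫ τ, whitKer k Ψ B x τ

theorem logWhitt_zero (a : ℕ → ℂ) (x : Fin 0 → ℝ) : logWhitt 0 a x = 1 := by
  simp only [logWhitt, WhittAr]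

theorem logWhitt_one (a : ℕ → ℂ) (x : Fin 1 → ℝ) :
    logWhitt 1 a x = whitStep 0 (fun _ => 1) ((Real.pi : ℂ) ^ ((a 0 - a 1) / 2))
      (fun _ => a 0) (fun _ => (a 0 - a 1) / 2) x := by
  have hprod : ∀ f : Fin (0 + 1) → ℂ, ∏ j, f j = f 0 := fun f => Fin.prod_univ_one f
  have hsum : ∀ f : Fin (0 + 1) → ℂ, ∑ j, f j = f 0 := fun f => Fin.sum_univ_one f
  set ν := (a 0 - a 1) / 2 with hν
  have hx : extR (fun j => Real.exp (x j)) 0 = Real.exp (x 0) :=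
    extR_coe (fun j => Real.exp (x j)) (0 : Fin 1)
  have hpi : (Real.pi : ℂ) = ((Real.exp (Real.log Real.pi) : ℝ) : ℂ) := by
    rw [Real.exp_log Real.pi_pos]
  have hB : BesselK ν (2 * Real.pi * Real.exp (x 0)) = (1 / 2) * ((Real.pi : ℂ) ^ ν *
      cexp (ν * x 0) * ∫ τ, whitKer 0 (fun _ => 1) (fun _ => ν) x τ) := by
    unfold BesselK
    congr 1
    have h1 := integral_posSet_eq_integral_exp (k := 1) (fun t =>
      cexp (-(((2 * Real.pi * Real.exp (x 0) : ℝ) : ℂ) / 2) * ((t 0 : ℂ) + 1 / (t 0 : ℂ))) *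
        (t 0 : ℂ) ^ ν / (t 0 : ℂ))
    have h2 := ((volume_preserving_funUnique (Fin 1) ℝ).setIntegral_preimage_emb
      (MeasurableEquiv.measurableEmbedding _) (fun t : ℝ =>
      cexp (-(((2 * Real.pi * Real.exp (x 0) : ℝ) : ℂ) / 2) * ((t : ℂ) + 1 / (t : ℂ))) *
        (t : ℂ) ^ ν / (t : ℂ)) (Set.Ioi 0))
    have h3 : (MeasurableEquiv.funUnique (Fin 1) ℝ) ⁻¹' Set.Ioi 0 = posSet 1 := by
      ext t
      simp [posSet, MeasurableEquiv.funUnique]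
    rw [h3] at h2
    refine h2.symm.trans (h1.trans ?_)
    rw [← integral_const_mul, ← integral_add_right_eq_self _ (fun _ : Fin 1 => x 0 + Real.log Real.pi)]
    refine integral_congr_ae (Filter.Eventually.of_forall fun τ => ?_)
    simp only [whitKer, hprod, one_mul, Pi.add_apply]
    rw [mul_div_cancel₀ _ (ofReal_exp_ne_zero _), ofReal_exp_cpow, hpi, ofReal_exp_cpow,
      ← Complex.exp_add, ← Complex.exp_add, ← Complex.exp_add]
    congr 1
    have e1 : Real.exp (2 * x 0 + τ 0) = Real.exp (x 0) * Real.exp (x 0) * Real.exp (τ 0) := by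
      rw [← Real.exp_add, ← Real.exp_add]; ring_nf
    have e2 : Real.exp (τ 0 + (x 0 + Real.log Real.pi)) =
        Real.exp (τ 0) * Real.exp (x 0) * Real.pi := by
      rw [Real.exp_add, Real.exp_add, Real.exp_log Real.pi_pos]; ring
    rw [e1, e2, Real.exp_neg]
    have n1 := ofReal_exp_ne_zero (x 0)
    have n2 := ofReal_exp_ne_zero (τ 0)
    have n3 : (Real.pi : ℂ) ≠ 0 := by exact_mod_cast Real.pi_ne_zero
    simp only [ofReal_mul, ofReal_sub, ofReal_neg, ofReal_add, ofReal_pow, ofReal_inv, ofReal_ofNat]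
    field_simp
    ring
  simp only [logWhitt, WhittAr, whitStep, hsum, hx]
  rw [hB, ofReal_exp_cpow, ← sub_eq_zero]
  have : cexp (a 0 * x 0) = cexp ((a 0 + a 1) / 2 * x 0) * cexp (ν * x 0) := by
    rw [← Complex.exp_add, hν]; ring_nf
  rw [this]
  ring

theorem logWhitt_add_two (k : ℕ) (a : ℕ → ℂ) :
    ∃ κ : ℂ, logWhitt (k + 2) a = whitStep (k + 1) (logWhitt (k + 1) (tildeA (k + 3) a)) κ
      (fun j => (((k + 2 - j : ℕ) : ℂ) * a 0) / ((k + 2 : ℕ) : ℂ))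
      (fun j => (((k + 3 : ℕ) : ℂ) * a 0) / (2 * ((k + 2 : ℕ) : ℂ)) +
        if j = Fin.last (k + 1) then -(sumA (k + 3) a) / 2 else 0) := by
  set L := Real.log Real.pi with hL
  refine ⟨(∏ j : Fin (k + 2), cexp ((((k + 2 - j : ℕ) : ℂ) * a 0) / ((k + 2 : ℕ) : ℂ) * L)) *
    cexp (-(sumA (k + 3) a) / 2 * L), funext fun x => ?_⟩
  have hx : ∀ j : Fin (k + 2), extR (fun j => Real.exp (x j)) j = Real.exp (x j) :=
    extR_coe (fun j => Real.exp (x j))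
  change WhittAr (k + 3) a _ = _
  simp only [WhittAr, whitStep]
  rw [integral_posSet_eq_integral_exp, ← integral_const_mul]
  refine integral_congr_ae (Filter.Eventually.of_forall fun τ => ?_)
  have hτ : ∀ j : Fin (k + 2), extR (fun j => Real.exp (τ j)) j = Real.exp (τ j) :=
    extR_coe (fun j => Real.exp (τ j))
  have hτl : extR (fun j => Real.exp (τ j)) (k + 1) = Real.exp (τ (Fin.last (k + 1))) :=
    hτ (Fin.last (k + 1))
  have hpie : ∀ r : ℝ, Real.pi * Real.exp r = Real.exp (r + L) := fun r => by
    rw [Real.exp_add, hL, Real.exp_log Real.pi_pos, mul_comm]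
  simp only [Finset.prod_range, hx, hτ, hτl]
  rw [WhittAr_eq_logWhitt (k + 1) (tildeA (k + 3) a) _
    (fun j => x j.succ + (τ j.succ - τ j.castSucc) / 2)]
  · rw [whitKer]
    have hne : (∏ j : Fin (k + 2), ((Real.exp (τ j) : ℝ) : ℂ)) ≠ 0 :=
      Finset.prod_ne_zero_iff.2 fun j _ => ofReal_exp_ne_zero _
    have key : (∏ j : Fin (k + 2), cexp (((-(Real.pi * Real.exp (x j)) ^ 2 * Real.exp (τ j) -
          1 / Real.exp (τ j) : ℝ) : ℂ)) *
          ((Real.pi * Real.exp (x j) : ℝ) : ℂ) ^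
            ((((k + 2 - j : ℕ) : ℂ) * a 0) / ((k + 2 : ℕ) : ℂ)) *
          ((Real.exp (τ j) : ℝ) : ℂ) ^ ((((k + 3 : ℕ) : ℂ) * a 0) / (2 * ((k + 2 : ℕ) : ℂ)))) *
        ((Real.pi * Real.exp (τ (Fin.last (k + 1))) : ℝ) : ℂ) ^ (-(sumA (k + 3) a) / 2) =
        (∏ j : Fin (k + 2), cexp ((((k + 2 - j : ℕ) : ℂ) * a 0) / ((k + 2 : ℕ) : ℂ) * L)) *
        cexp (-(sumA (k + 3) a) / 2 * L) *
        cexp (∑ j : Fin (k + 2), (((k + 2 - j : ℕ) : ℂ) * a 0) / ((k + 2 : ℕ) : ℂ) * x j) *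
        ∏ j : Fin (k + 2), cexp (((-(Real.pi ^ 2 * Real.exp (2 * x j + τ j)) -
          Real.exp (-τ j) : ℝ) : ℂ) + ((((k + 3 : ℕ) : ℂ) * a 0) / (2 * ((k + 2 : ℕ) : ℂ)) +
          if j = Fin.last (k + 1) then -(sumA (k + 3) a) / 2 else 0) * τ j) := by
      simp only [hpie, ofReal_exp_cpow, ← Complex.exp_add, ← Complex.exp_sum]
      congr 1
      have hlast : ∑ j : Fin (k + 2), (if j = Fin.last (k + 1) then -(sumA (k + 3) a) / 2 else 0) *
          (τ j : ℂ) = -(sumA (k + 3) a) / 2 * τ (Fin.last (k + 1)) := by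
        simp
      have hsq : ∀ j : Fin (k + 2), -Real.exp (x j + L) ^ 2 * Real.exp (τ j) -
          1 / Real.exp (τ j) = -(Real.pi ^ 2 * Real.exp (2 * x j + τ j)) - Real.exp (-τ j) := by
        intro j
        rw [← hpie, Real.exp_neg, Real.exp_add, two_mul, Real.exp_add]
        ring
      simp only [hsq, add_mul, Finset.sum_add_distrib, hlast, ofReal_add, mul_add]
      ring
    have := congrArg (fun z => logWhitt (k + 1) (tildeA (k + 3) a)
      (fun j => x j.succ + (τ j.succ - τ j.castSucc) / 2) * z) key
    rw [← mul_assoc] at this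
    rw [this, ← mul_assoc, mul_comm, ← mul_assoc, inv_mul_cancel₀ hne, one_mul]
    ring
  · intro j
    have h1 : ((j : ℕ) + 1) = (j.succ : Fin (k + 2)) := rfl
    have h2 : (j : ℕ) = (j.castSucc : Fin (k + 2)) := rfl
    rw [h1, hx, hτ]
    conv_lhs => rw [h2]
    rw [hτ, ← Real.exp_sub, ← Real.exp_half, ← Real.exp_add]

/-- Domination of `Ψ` by every decreasing exponential. -/
def WhitBound (k : ℕ) (Ψ : (Fin k → ℝ) → ℂ) : Prop :=
  ∀ ε : Fin k → ℝ, (∀ j, 0 < ε j) → ∃ C : ℝ, ∀ x, ‖Ψ x‖ ≤ C * Real.exp (-∑ j, ε j * x j)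

theorem exists_exp_neg_mul_exp_le {c : ℝ} (hc : 0 < c) {ρ : ℝ} (hρ : 0 < ρ) :
    ∃ C : ℝ, 0 < C ∧ ∀ w, Real.exp (-(c * Real.exp w)) ≤ C * Real.exp (-(ρ * w)) := by
  refine ⟨Real.exp (ρ * (Real.log (ρ / c) - 1)), Real.exp_pos _, fun w => ?_⟩
  rw [← Real.exp_add, Real.exp_le_exp]
  have h := Real.add_one_le_exp (w - Real.log (ρ / c))
  rw [Real.exp_sub, Real.exp_log (div_pos hρ hc)] at h
  have h2 := mul_le_mul_of_nonneg_left h hρ.le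
  have h3 : ρ * (Real.exp w / (ρ / c)) = c * Real.exp w := by
    field_simp
  rw [h3] at h2
  nlinarith

theorem integrable_exp_neg_mul_abs {η : ℝ} (hη : 0 < η) :
    Integrable fun τ : ℝ => Real.exp (-(η * |τ|)) := by
  rw [← integrableOn_univ, ← Set.Iic_union_Ioi (a := (0 : ℝ))]
  refine IntegrableOn.union ?_ ?_
  · refine (integrableOn_exp_mul_Iic hη 0).congr_fun (fun τ hτ => ?_) measurableSet_Iic
    simp only
    rw [abs_of_nonpos (Set.mem_Iic.1 hτ)]
    ring_nf
  · refine (integrableOn_exp_mul_Ioi (neg_neg_of_pos hη) 0).congr_fun (fun τ hτ => ?_)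
      measurableSet_Ioi
    simp only
    rw [abs_of_pos (Set.mem_Ioi.1 hτ)]
    ring_nf

theorem integrable_exp_neg_mul_sub_exp {c η : ℝ} (hc : 0 < c) (hη : 0 < η) :
    Integrable fun τ : ℝ => Real.exp (-(η * τ) - c * Real.exp (-τ)) := by
  obtain ⟨C, hC, h⟩ := exists_exp_neg_mul_exp_le hc (mul_pos two_pos hη)
  refine ((integrable_exp_neg_mul_abs hη).const_mul (max C 1)).mono'
    (by fun_prop) (Filter.Eventually.of_forall fun τ => ?_)
  rw [Real.norm_of_nonneg (Real.exp_pos _).le]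
  rcases le_total 0 τ with h0 | h0
  · rw [abs_of_nonneg h0]
    refine le_trans ?_ (mul_le_mul_of_nonneg_right (le_max_right C 1) (Real.exp_pos _).le)
    rw [one_mul, Real.exp_le_exp]
    have := mul_pos hc (Real.exp_pos (-τ))
    linarith
  · rw [abs_of_nonpos h0]
    refine le_trans ?_ (mul_le_mul_of_nonneg_right (le_max_left C 1) (Real.exp_pos _).le)
    rw [sub_eq_add_neg, Real.exp_add]
    refine (mul_le_mul_of_nonneg_left (h (-τ)) (Real.exp_pos _).le).trans (le_of_eq ?_)
    rw [mul_left_comm, ← Real.exp_add]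
    ring_nf

theorem sum_castSucc_telescope {k : ℕ} (τ : Fin (k + 1) → ℝ) :
    ∑ j : Fin k, (τ j.succ - τ j.castSucc) = τ (Fin.last k) - τ 0 := by
  have h1 := Fin.sum_univ_succ τ
  have h2 := Fin.sum_univ_castSucc τ
  rw [Finset.sum_sub_distrib]
  linarith

theorem norm_cexp_ofReal_add (r τ : ℝ) {b : ℂ} (hb : b.re = 0) :
    ‖cexp ((r : ℂ) + b * τ)‖ = Real.exp r := by
  rw [Complex.norm_exp]
  simp [hb]

theorem exists_whitKer_bound {k : ℕ} {Ψ : (Fin k → ℝ) → ℂ} (hΨ : WhitBound k Ψ)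
    {B : Fin (k + 1) → ℂ} (hB : ∀ j, (B j).re = 0) (ε : Fin (k + 1) → ℝ) (hε : ∀ j, 0 < ε j) :
    ∃ G : (Fin (k + 1) → ℝ) → ℝ, Integrable G ∧
      ∀ x τ, ‖whitKer k Ψ B x τ‖ ≤ Real.exp (-∑ j, ε j * x j) * G τ := by
  obtain ⟨j₀, -, hj₀⟩ := Finset.exists_min_image Finset.univ ε ⟨0, Finset.mem_univ _⟩
  set δ := ε j₀ / 2 with hδ
  have hδ0 : 0 < δ := by have := hε j₀; positivity
  have hδε : ∀ j, 2 * δ ≤ ε j := fun j => by have := hj₀ j (Finset.mem_univ _); rw [hδ]; linarith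
  obtain ⟨C, hC⟩ := hΨ (fun _ => δ) (fun _ => hδ0)
  let ρ : Fin (k + 1) → ℝ := Fin.cons (ε 0 / 2) (fun j : Fin k => (ε j.succ - δ) / 2)
  have hρ0 : ρ 0 = ε 0 / 2 := rfl
  have hρs : ∀ j : Fin k, ρ j.succ = (ε j.succ - δ) / 2 := fun j => rfl
  have hρ : ∀ j, 0 < ρ j := by
    refine Fin.cases ?_ fun j => ?_
    · rw [hρ0]; have := hε 0; positivity
    · rw [hρs]; have := hδε j.succ; linarith
  choose D hD0 hD using fun j => exists_exp_neg_mul_exp_le (pow_pos Real.pi_pos 2) (hρ j)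
  let η : Fin (k + 1) → ℝ := fun j =>
    ρ j + ((if j = Fin.last k then δ / 2 else 0) - if j = 0 then δ / 2 else 0)
  have hη : ∀ j, 0 < η j := by
    intro j
    have h1 : 0 ≤ (if j = Fin.last k then δ / 2 else 0) := by split_ifs <;> positivity
    have h2 : (if j = 0 then δ / 2 else 0) < ρ j := by
      split_ifs with h
      · rw [h, hρ0]; have := hδε 0; linarith
      · exact hρ j
    simp only [η]
    linarith
  refine ⟨fun τ => C * ∏ j, (D j * Real.exp (-(η j * τ j) - 1 * Real.exp (-τ j))), ?_, ?_⟩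
  · exact (Integrable.fintype_prod fun j =>
      (integrable_exp_neg_mul_sub_exp one_pos (hη j)).const_mul (D j)).const_mul C
  · intro x τ
    have hprod : ‖∏ j, cexp (((-(Real.pi ^ 2 * Real.exp (2 * x j + τ j)) - Real.exp (-τ j) : ℝ) : ℂ)
        + B j * τ j)‖ ≤
        ∏ j, (D j * Real.exp (-(ρ j * (2 * x j + τ j)) - 1 * Real.exp (-τ j))) := by
      rw [norm_prod]
      refine Finset.prod_le_prod (fun _ _ => norm_nonneg _) fun j _ => ?_
      rw [norm_cexp_ofReal_add _ _ (hB j), sub_eq_add_neg, Real.exp_add (-(Real.pi ^ 2 * _)),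
        sub_eq_add_neg, Real.exp_add (-(ρ j * _)), ← mul_assoc, one_mul]
      exact mul_le_mul_of_nonneg_right (hD j _) (Real.exp_pos _).le
    rw [whitKer, norm_mul]
    refine (mul_le_mul (hC _) hprod (norm_nonneg _)
      ((norm_nonneg _).trans (hC _))).trans (le_of_eq ?_)
    simp only [Finset.prod_mul_distrib, ← Real.exp_sum]
    have key : -∑ j : Fin k, δ * (x j.succ + (τ j.succ - τ j.castSucc) / 2) +
        ∑ j, (-(ρ j * (2 * x j + τ j)) - 1 * Real.exp (-τ j)) =
        -∑ j, ε j * x j + ∑ j, (-(η j * τ j) - 1 * Real.exp (-τ j)) := by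
      have t1 : ∑ j : Fin k, δ * (x j.succ + (τ j.succ - τ j.castSucc) / 2) =
          δ * ∑ j : Fin k, x j.succ + δ / 2 * (τ (Fin.last k) - τ 0) := by
        rw [← sum_castSucc_telescope, Finset.mul_sum, Finset.mul_sum, ← Finset.sum_add_distrib]
        exact Finset.sum_congr rfl fun j _ => by ring
      have t2 : ∑ j, η j * τ j = ∑ j, ρ j * τ j + (δ / 2 * (τ (Fin.last k) - τ 0)) := by
        simp only [η, add_mul, sub_mul, ite_mul, zero_mul, Finset.sum_add_distrib,
          Finset.sum_sub_distrib, Finset.sum_ite_eq', Finset.mem_univ, if_true]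
        ring
      have t3 : ∑ j, ρ j * (2 * x j + τ j) = ∑ j, ε j * x j - δ * ∑ j : Fin k, x j.succ +
          ∑ j, ρ j * τ j := by
        simp only [mul_add, Finset.sum_add_distrib]
        rw [Fin.sum_univ_succ (fun j => ρ j * (2 * x j)), Fin.sum_univ_succ (fun j => ε j * x j),
          Finset.mul_sum, hρ0]
        simp only [hρs]
        rw [add_sub_assoc, ← Finset.sum_sub_distrib]
        congr 2
        · ring
        · exact Finset.sum_congr rfl fun j _ => by ring
      rw [Finset.sum_sub_distrib, Finset.sum_sub_distrib, Finset.sum_neg_distrib,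
        Finset.sum_neg_distrib, t1, t2, t3]
      ring
    have key' := congrArg Real.exp key
    rw [Real.exp_add, Real.exp_add] at key'
    calc _ = C * (∏ j, D j) * (Real.exp (-∑ j : Fin k, δ * (x j.succ + (τ j.succ - τ j.castSucc) / 2))
          * Real.exp (∑ j, (-(ρ j * (2 * x j + τ j)) - 1 * Real.exp (-τ j)))) := by ring
      _ = _ := by rw [key']; ring

theorem continuous_whitKer {k : ℕ} {Ψ : (Fin k → ℝ) → ℂ} (hΨ : Continuous Ψ)
    (B : Fin (k + 1) → ℂ) :
    Continuous fun p : (Fin (k + 1) → ℝ) × (Fin (k + 1) → ℝ) => whitKer k Ψ B p.1 p.2 := by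
  unfold whitKer
  fun_prop

theorem whitBound_whitStep {k : ℕ} {Ψ : (Fin k → ℝ) → ℂ} (hΨ : WhitBound k Ψ) (κ : ℂ)
    {A B : Fin (k + 1) → ℂ} (hA : ∀ j, (A j).re = 0) (hB : ∀ j, (B j).re = 0) :
    WhitBound (k + 1) (whitStep k Ψ κ A B) := by
  intro ε hε
  obtain ⟨G, hG, h⟩ := exists_whitKer_bound hΨ hB ε hε
  refine ⟨‖κ‖ * ∫ τ, G τ, fun x => ?_⟩
  have h1 : ‖cexp (∑ j, A j * x j)‖ = 1 := by
    rw [Complex.norm_exp]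
    simp [hA]
  have h2 : ‖∫ τ, whitKer k Ψ B x τ‖ ≤ Real.exp (-∑ j, ε j * x j) * ∫ τ, G τ := by
    rw [← integral_const_mul]
    exact norm_integral_le_of_norm_le (hG.const_mul _) (Filter.Eventually.of_forall (h x))
  rw [whitStep, norm_mul, norm_mul, h1, mul_one]
  refine (mul_le_mul_of_nonneg_left h2 (norm_nonneg _)).trans (le_of_eq (by ring))

theorem continuous_whitStep {k : ℕ} {Ψ : (Fin k → ℝ) → ℂ} (hΨ : WhitBound k Ψ)
    (hc : Continuous Ψ) (κ : ℂ) (A : Fin (k + 1) → ℂ) {B : Fin (k + 1) → ℂ}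
    (hB : ∀ j, (B j).re = 0) : Continuous (whitStep k Ψ κ A B) := by
  obtain ⟨G, hG, h⟩ := exists_whitKer_bound hΨ hB (fun _ => 1) (fun _ => one_pos)
  have hG0 : ∀ τ, 0 ≤ G τ := fun τ => by
    have := (norm_nonneg _).trans (h 0 τ)
    exact nonneg_of_mul_nonneg_right this (Real.exp_pos _)
  have hK := continuous_whitKer hc B
  refine Continuous.mul (by fun_prop) (continuous_iff_continuousAt.2 fun x₀ => ?_)
  have hcont : Continuous fun x : Fin (k + 1) → ℝ => Real.exp (-∑ j, 1 * x j) := by fun_prop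
  refine continuousAt_of_dominated
    (bound := fun τ => (Real.exp (-∑ j, 1 * x₀ j) + 1) * G τ) ?_ ?_ (hG.const_mul _) ?_
  · exact Filter.Eventually.of_forall fun x =>
      (hK.comp (continuous_const.prodMk continuous_id)).aestronglyMeasurable
  · filter_upwards [hcont.continuousAt.eventually_lt_const (lt_add_one _)] with x hx
    exact Filter.Eventually.of_forall fun τ =>
      (h x τ).trans (mul_le_mul_of_nonneg_right hx.le (hG0 τ))
  · exact Filter.Eventually.of_forall fun τ =>
      (hK.comp (continuous_id.prodMk continuous_const)).continuousAt

theorem logWhitt_eq_whitStep (k : ℕ) (a : ℕ → ℂ) (ha : ∀ j < k + 2, (a j).re = 0) :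
    ∃ (Ψ : (Fin k → ℝ) → ℂ) (κ : ℂ) (A B : Fin (k + 1) → ℂ), (∀ j, (A j).re = 0) ∧
      (∀ j, (B j).re = 0) ∧ Continuous Ψ ∧ WhitBound k Ψ ∧
      logWhitt (k + 1) a = whitStep k Ψ κ A B := by
  have hzero : ∀ z w : ℂ, z.im = 0 → w.re = 0 → (z * w).re = 0 := fun z w hz hw => by
    simp [Complex.mul_re, hz, hw]
  induction k generalizing a with
  | zero =>
    refine ⟨fun _ => 1, _, _, _, fun _ => ha 0 (by norm_num), fun _ => ?_, continuous_const,
      fun ε _ => ⟨1, fun x => by simp⟩, funext (logWhitt_one a)⟩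
    rw [div_eq_inv_mul]
    exact hzero _ _ (by simp) (by simp [ha 0 (by norm_num), ha 1 (by norm_num)])
  | succ k ih =>
    obtain ⟨κ, hκ⟩ := logWhitt_add_two k a
    have h0 : (a 0).re = 0 := ha 0 (by omega)
    have hti : ∀ j < k + 2, (tildeA (k + 3) a j).re = 0 := by
      intro j hj
      rw [tildeA, Complex.add_re, ha (j + 1) (by omega), zero_add, div_eq_inv_mul]
      refine hzero _ _ ?_ h0
      have : (((k + 3 : ℕ) : ℂ) - 1)⁻¹ = (((((k + 3 : ℕ) : ℝ) - 1)⁻¹ : ℝ) : ℂ) := by push_cast; rfl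
      rw [this, Complex.ofReal_im]
    obtain ⟨Ψ, κ', A, B, hA, hB, hΨc, hΨ, he⟩ := ih _ hti
    refine ⟨_, κ, _, _, fun j => ?_, fun j => ?_, ?_, ?_, hκ⟩
    · rw [mul_comm, mul_div_assoc, mul_comm]
      refine hzero _ _ ?_ h0
      have : (((k + 2 - j : ℕ) : ℂ) / ((k + 2 : ℕ) : ℂ)) =
        ((((k + 2 - j : ℕ) : ℝ) / ((k + 2 : ℕ) : ℝ) : ℝ) : ℂ) := by push_cast; rfl
      rw [this, Complex.ofReal_im]
    · have h1 : (((k + 3 : ℕ) : ℂ) * a 0 / (2 * ((k + 2 : ℕ) : ℂ))).re = 0 := by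
        rw [mul_comm, mul_div_assoc, mul_comm]
        refine hzero _ _ ?_ h0
        have : (((k + 3 : ℕ) : ℂ) / (2 * ((k + 2 : ℕ) : ℂ))) =
          ((((k + 3 : ℕ) : ℝ) / (2 * ((k + 2 : ℕ) : ℝ)) : ℝ) : ℂ) := by push_cast; rfl
        rw [this, Complex.ofReal_im]
      have h2 : (-(sumA (k + 3) a) / 2).re = 0 := by
        rw [div_eq_inv_mul]
        refine hzero _ _ (by simp) ?_
        rw [Complex.neg_re, sumA, Complex.re_sum, Finset.sum_eq_zero, neg_zero]
        exact fun j hj => ha j (by have := Finset.mem_range.1 hj; omega)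
      rw [Complex.add_re, h1, zero_add]
      split_ifs
      · exact h2
      · rfl
    · rw [he]
      exact continuous_whitStep hΨ hΨc κ' A hB
    · rw [he]
      exact whitBound_whitStep hΨ κ' hA hB

theorem continuous_logWhitt (k : ℕ) (a : ℕ → ℂ) (ha : ∀ j < k + 1, (a j).re = 0) :
    Continuous (logWhitt k a) := by
  cases k with
  | zero =>
    rw [funext (logWhitt_zero a)]
    exact continuous_const
  | succ k =>
    obtain ⟨Ψ, κ, A, B, hA, hB, hc, hΨ, he⟩ := logWhitt_eq_whitStep k a ha
    rw [he]
    exact continuous_whitStep hΨ hc κ A hB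

theorem whitBound_logWhitt (k : ℕ) (a : ℕ → ℂ) (ha : ∀ j < k + 1, (a j).re = 0) :
    WhitBound k (logWhitt k a) := by
  cases k with
  | zero =>
    rw [funext (logWhitt_zero a)]
    exact fun ε _ => ⟨1, fun x => by simp⟩
  | succ k =>
    obtain ⟨Ψ, κ, A, B, hA, hB, hc, hΨ, he⟩ := logWhitt_eq_whitStep k a ha
    rw [he]
    exact whitBound_whitStep hΨ κ hA hB

/-- `∫ exp(-Y e^τ - e^{-τ} + β τ) dτ`. -/
def expKernelInt (Y : ℝ) (β : ℂ) : ℂ :=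
  ∫ τ : ℝ, cexp (((-(Y * Real.exp τ) - Real.exp (-τ) : ℝ) : ℂ) + β * τ)

theorem exp_neg_mul_le {s : ℝ} (hs : 0 ≤ s) :
    Real.exp (-s) * (1 + s + s ^ 2) ≤ 8 * Real.exp (-(s / 2)) := by
  have h := Real.quadratic_le_exp_of_nonneg (by positivity : 0 ≤ s / 2)
  have h2 : Real.exp (-s) = Real.exp (-(s / 2)) * Real.exp (-(s / 2)) := by
    rw [← Real.exp_add]; ring_nf
  have h3 : Real.exp (-(s / 2)) * Real.exp (s / 2) = 1 := by
    rw [← Real.exp_add]; simp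
  have h4 : 1 + s + s ^ 2 ≤ 8 * Real.exp (s / 2) := by nlinarith
  have h5 := (Real.exp_pos (-s)).le
  calc _ ≤ Real.exp (-s) * (8 * Real.exp (s / 2)) := mul_le_mul_of_nonneg_left h4 h5
    _ = 8 * Real.exp (-(s / 2)) * (Real.exp (-(s / 2)) * Real.exp (s / 2)) := by rw [h2]; ring
    _ = _ := by rw [h3, mul_one]

theorem exists_norm_expKernelInt_le {b ρ : ℝ} (hbρ : b < ρ) :
    ∃ C : ℝ, 0 ≤ C ∧ ∀ (Y : ℝ) (M : ℝ) (β : ℂ), 0 ≤ Y → β.re = b →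
      (∀ τ, Real.exp (-(Y * Real.exp τ / 2)) ≤ M * Real.exp (-(ρ * τ))) →
      ‖expKernelInt Y β‖ ≤ C * M * (1 + β.im ^ 2)⁻¹ := by
  have hI := integrable_exp_neg_mul_sub_exp (c := 1 / 2) (η := ρ - b) (by norm_num) (by linarith)
  set D := ∫ τ : ℝ, Real.exp (-((ρ - b) * τ) - 1 / 2 * Real.exp (-τ)) with hD
  have hD0 : 0 ≤ D := integral_nonneg fun τ => (Real.exp_pos _).le
  refine ⟨16 * D, by positivity, fun Y M β hY hβ hM => ?_⟩
  let s : ℝ → ℝ := fun τ => Y * Real.exp τ + Real.exp (-τ)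
  let r : ℝ → ℝ := fun τ => Real.exp (-τ) - Y * Real.exp τ
  have hs0 : ∀ τ, 0 ≤ s τ := fun τ => by positivity
  have hrs : ∀ τ, |r τ| ≤ s τ := fun τ => by
    have h1 := mul_nonneg hY (Real.exp_pos τ).le
    have h2 := (Real.exp_pos (-τ)).le
    simp only [r, s, abs_le]
    constructor <;> linarith
  let g : ℝ → ℂ := fun τ => ((Real.exp (-s τ) : ℝ) : ℂ)
  let g' : ℝ → ℂ := fun τ => ((Real.exp (-s τ) * r τ : ℝ) : ℂ)
  let g'' : ℝ → ℂ := fun τ => ((Real.exp (-s τ) * (r τ ^ 2 - s τ) : ℝ) : ℂ)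
  let u : ℝ → ℂ := fun τ => cexp (β * τ)
  have hsd : ∀ τ, HasDerivAt s (-r τ) τ := fun τ => by
    have := ((Real.hasDerivAt_exp τ).const_mul Y).add ((hasDerivAt_neg τ).exp)
    refine this.congr_deriv ?_
    simp only [r]; ring
  have hrd : ∀ τ, HasDerivAt r (-s τ) τ := fun τ => by
    have := ((hasDerivAt_neg τ).exp).sub ((Real.hasDerivAt_exp τ).const_mul Y)
    refine this.congr_deriv ?_
    simp only [s]; ring
  have hgd : ∀ τ, HasDerivAt g (g' τ) τ := fun τ => by
    refine HasDerivAt.ofReal_comp (((hsd τ).neg.exp).congr_deriv ?_)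
    simp
  have hgd' : ∀ τ, HasDerivAt g' (g'' τ) τ := fun τ => by
    refine HasDerivAt.ofReal_comp ((((hsd τ).neg.exp).mul (hrd τ)).congr_deriv ?_)
    simp only [Pi.neg_apply]
    ring
  have hud : ∀ (z : ℂ) (τ : ℝ), HasDerivAt (fun t : ℝ => z * u t) (z * (β * u τ)) τ := fun z τ => by
    have h := (((hasDerivAt_id (τ : ℂ)).const_mul β).cexp.comp_ofReal).const_mul z
    refine h.congr_deriv ?_
    simp [u, mul_comm]
  have hun : ∀ τ, ‖u τ‖ = Real.exp (b * τ) := fun τ => by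
    simp [u, Complex.norm_exp, hβ]
  have hdom : ∀ (f : ℝ → ℝ), (∀ τ, |f τ| ≤ 1 + s τ + s τ ^ 2) → ∀ τ,
      ‖((Real.exp (-s τ) * f τ : ℝ) : ℂ) * u τ‖ ≤
        8 * M * Real.exp (-((ρ - b) * τ) - 1 / 2 * Real.exp (-τ)) := fun f hf τ => by
    rw [norm_mul, hun, Complex.norm_real, norm_mul, Real.norm_of_nonneg (Real.exp_pos _).le,
      Real.norm_eq_abs]
    have h1 := (mul_le_mul_of_nonneg_left (hf τ) (Real.exp_pos (-s τ)).le).trans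
      (exp_neg_mul_le (hs0 τ))
    have h2 : Real.exp (-(s τ / 2)) ≤ M * Real.exp (-(ρ * τ)) * Real.exp (-(1 / 2 * Real.exp (-τ))) := by
      refine le_trans (le_of_eq ?_) (mul_le_mul_of_nonneg_right (hM τ) (Real.exp_pos _).le)
      rw [← Real.exp_add]
      simp only [s]; ring_nf
    calc _ ≤ 8 * (M * Real.exp (-(ρ * τ)) * Real.exp (-(1 / 2 * Real.exp (-τ)))) * Real.exp (b * τ) :=
          mul_le_mul_of_nonneg_right (h1.trans (by linarith)) (Real.exp_pos _).le
      _ = 8 * M * (Real.exp (-(ρ * τ)) * Real.exp (-(1 / 2 * Real.exp (-τ))) * Real.exp (b * τ)) := by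
          ring
      _ = _ := by rw [← Real.exp_add, ← Real.exp_add]; ring_nf
  have hsc : Continuous s := by fun_prop
  have hrc : Continuous r := by fun_prop
  have huc : Continuous u := by fun_prop
  have hInt : ∀ (f : ℝ → ℝ), Continuous f → (∀ τ, |f τ| ≤ 1 + s τ + s τ ^ 2) →
      Integrable (fun τ => ((Real.exp (-s τ) * f τ : ℝ) : ℂ) * u τ) ∧
      ‖∫ τ, ((Real.exp (-s τ) * f τ : ℝ) : ℂ) * u τ‖ ≤ 8 * M * D := fun f hfc hf => by
    constructor
    · exact (hI.const_mul (8 * M)).mono' (by fun_prop) (Filter.Eventually.of_forall (hdom f hf))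
    · rw [hD, ← integral_const_mul]
      exact norm_integral_le_of_norm_le (hI.const_mul _) (Filter.Eventually.of_forall (hdom f hf))
  have b0 := hInt (fun _ => 1) continuous_const fun τ => by
    have := hs0 τ; rw [abs_one]; nlinarith
  have b1 := hInt r hrc fun τ => by
    have := hs0 τ; have := hrs τ; nlinarith
  have b2 := hInt (fun τ => r τ ^ 2 - s τ) (by fun_prop) fun τ => by
    have h0 := hs0 τ
    have h1 := sq_le_sq' (neg_le_of_abs_le (hrs τ)) (le_of_abs_le (hrs τ))
    rw [abs_le]
    constructor <;> nlinarith [sq_nonneg (r τ)]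
  simp only [mul_one] at b0
  have p1 := integral_mul_deriv_eq_deriv_mul_of_integrable (u := g) (u' := g') (v := fun t => β * u t)
    (v' := fun t => β * (β * u t)) (fun τ _ => hgd τ) (fun τ _ => hud β τ)
    ((b0.1.const_mul (β * β)).congr (Filter.Eventually.of_forall fun τ => by
      simp only [g, Pi.mul_apply]; ring))
    ((b1.1.const_mul β).congr (Filter.Eventually.of_forall fun τ => by
      simp only [g', Pi.mul_apply]; ring))
    ((b0.1.const_mul β).congr (Filter.Eventually.of_forall fun τ => by
      simp only [g, Pi.mul_apply]; ring))
  have p2 := integral_mul_deriv_eq_deriv_mul_of_integrable (u := g') (u' := g'') (v := fun t => 1 * u t)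
    (v' := fun t => 1 * (β * u t)) (fun τ _ => hgd' τ) (fun τ _ => hud 1 τ)
    ((b1.1.const_mul β).congr (Filter.Eventually.of_forall fun τ => by
      simp only [g', Pi.mul_apply]; ring))
    (b2.1.congr (Filter.Eventually.of_forall fun τ => by
      simp only [g'', Pi.mul_apply]; ring))
    (b1.1.congr (Filter.Eventually.of_forall fun τ => by
      simp only [g', Pi.mul_apply]; ring))
  simp only [one_mul] at p2
  rw [p2, neg_neg] at p1
  have hJ : expKernelInt Y β = ∫ τ, g τ * u τ := by
    rw [expKernelInt]
    congr 1
    ext τ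
    simp only [g, u, s]
    rw [Complex.ofReal_exp, ← Complex.exp_add]
    push_cast
    ring_nf
  have hJ2 : β * β * expKernelInt Y β = ∫ τ, g'' τ * u τ := by
    rw [← p1, hJ, ← integral_const_mul]
    congr 1
    ext τ
    ring
  have n2 : ‖β‖ ^ 2 * ‖expKernelInt Y β‖ ≤ 8 * M * D := by
    rw [sq, ← norm_mul, ← norm_mul, hJ2]
    exact b2.2
  have n0 : ‖expKernelInt Y β‖ ≤ 8 * M * D := by
    rw [hJ]; exact b0.2
  have him : β.im ^ 2 ≤ ‖β‖ ^ 2 := by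
    rw [← sq_abs]
    exact pow_le_pow_left₀ (abs_nonneg _) (Complex.abs_im_le_norm β) 2
  have hpos : 0 < 1 + β.im ^ 2 := by positivity
  rw [← div_eq_mul_inv, le_div_iff₀ hpos]
  nlinarith [mul_le_mul_of_nonneg_right him (norm_nonneg (expKernelInt Y β))]

theorem exists_le_exp_neg_abs {k : ℕ} {T : Type*} [MeasurableSpace T] {μ : Measure T}
    {f : (Fin k → ℝ) → T → ℝ} (hf : ∀ x t, 0 ≤ f x t)
    (h : ∀ ε : Fin k → ℝ, (∀ j, 0 < ε j) →
      ∃ G : T → ℝ, Integrable G μ ∧ ∀ x t, f x t ≤ Real.exp (-∑ j, ε j * x j) * G t)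
    {σ : Fin k → ℝ} (hσ : ∀ j, 0 < σ j) :
    ∃ G : T → ℝ, Integrable G μ ∧ (∀ t, 0 ≤ G t) ∧ ∀ x t, f x t ≤
      Real.exp (-∑ j, σ j * x j) * (∏ j, Real.exp (-(σ j / 2 * |x j|))) * G t := by
  let ε : (Fin k → Bool) → Fin k → ℝ := fun b j => if b j then σ j / 2 else 3 * σ j / 2
  have hε : ∀ b j, 0 < ε b j := fun b j => by
    have := hσ j
    simp only [ε]
    split_ifs <;> positivity
  choose G hG hfG using fun b => h (ε b) (hε b)
  have hG0 : ∀ b t, 0 ≤ G b t := fun b t =>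
    nonneg_of_mul_nonneg_right ((hf 0 t).trans (hfG b 0 t)) (Real.exp_pos _)
  refine ⟨fun t => ∑ b, G b t, integrable_finsetSum _ fun b _ => hG b,
    fun t => Finset.sum_nonneg fun b _ => hG0 b t, fun x t => ?_⟩
  let b : Fin k → Bool := fun j => decide (x j ≤ 0)
  refine (hfG b x t).trans (mul_le_mul (le_of_eq ?_)
    (Finset.single_le_sum (f := fun b => G b t) (fun b _ => hG0 b t) (Finset.mem_univ b))
    (hG0 b t) (by positivity))
  rw [← Real.exp_sum, ← Real.exp_add, ← Finset.sum_neg_distrib, ← Finset.sum_neg_distrib,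
    ← Finset.sum_add_distrib]
  congr 1
  refine Finset.sum_congr rfl fun j _ => ?_
  simp only [ε, b, decide_eq_true_eq]
  split_ifs with h0
  · rw [abs_of_nonpos h0]; ring
  · rw [abs_of_pos (not_le.1 h0)]; ring

theorem WhitBound.exists_norm_mul_cexp_le {k : ℕ} {Ψ : (Fin k → ℝ) → ℂ} (hΨ : WhitBound k Ψ)
    {S : Fin k → ℂ} (hS : ∀ j, 0 < (S j).re) :
    ∃ C : ℝ, 0 ≤ C ∧ ∀ x : Fin k → ℝ, ‖Ψ x * cexp (∑ j, S j * x j)‖ ≤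
      C * ∏ j, Real.exp (-((S j).re / 2 * |x j|)) := by
  obtain ⟨G, -, hG0, hG⟩ := exists_le_exp_neg_abs (T := Unit) (μ := Measure.count)
    (f := fun x _ => ‖Ψ x‖) (fun _ _ => norm_nonneg _)
    (fun ε hε => by
      obtain ⟨C, hC⟩ := hΨ ε hε
      exact ⟨fun _ => C, integrable_const _, fun x _ => (hC x).trans_eq (mul_comm _ _)⟩) hS
  refine ⟨G (), hG0 _, fun x => ?_⟩
  have he : ‖cexp (∑ j, S j * x j)‖ = Real.exp (∑ j, (S j).re * x j) := by
    rw [Complex.norm_exp]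
    simp
  rw [norm_mul, he]
  refine (mul_le_mul_of_nonneg_right (hG x ()) (Real.exp_pos _).le).trans (le_of_eq ?_)
  have : Real.exp (-∑ j, (S j).re * x j) * Real.exp (∑ j, (S j).re * x j) = 1 := by
    rw [← Real.exp_add]; simp
  linear_combination (∏ j, Real.exp (-((S j).re / 2 * |x j|))) * G () * this

theorem integrable_prod_exp_neg_abs {k : ℕ} {η : Fin k → ℝ} (hη : ∀ j, 0 < η j) :
    Integrable fun x : Fin k → ℝ => ∏ j, Real.exp (-(η j * |x j|)) :=
  Integrable.fintype_prod fun j => integrable_exp_neg_mul_abs (hη j)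

theorem WhitBound.integrable_mul_cexp {k : ℕ} {Ψ : (Fin k → ℝ) → ℂ} (hΨ : WhitBound k Ψ)
    (hc : Continuous Ψ) {S : Fin k → ℂ} (hS : ∀ j, 0 < (S j).re) :
    Integrable fun x : Fin k → ℝ => Ψ x * cexp (∑ j, S j * x j) := by
  obtain ⟨C, -, hC⟩ := hΨ.exists_norm_mul_cexp_le hS
  exact ((integrable_prod_exp_neg_abs fun j => half_pos (hS j)).const_mul C).mono'
    (by fun_prop) (Filter.Eventually.of_forall hC)

theorem measurePreserving_shear {T : Type*} [MeasurableSpace T] (μ : Measure T) [SFinite μ]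
    {k : ℕ} {L : T → Fin k → ℝ} (hL : Measurable L) :
    MeasurePreserving (fun p : T × (Fin k → ℝ) => (p.1, p.2 + L p.1))
      (μ.prod volume) (μ.prod volume) :=
  (MeasurePreserving.id μ).skew_product (by fun_prop)
    (Filter.Eventually.of_forall fun t => (measurePreserving_add_right volume (L t)).map_eq)

theorem integrable_shear {T : Type*} [MeasurableSpace T] {μ : Measure T} [SFinite μ]
    {k : ℕ} {L : T → Fin k → ℝ} (hL : Measurable L) {F : T × (Fin k → ℝ) → ℂ}
    (hF : Integrable F (μ.prod volume)) :
    Integrable (fun p : T × (Fin k → ℝ) => F (p.1, p.2 + L p.1)) (μ.prod volume) :=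
  (measurePreserving_shear μ hL).integrable_comp_of_integrable hF

theorem expKernelInt_eq (Z : ℂ) :
    ∫ x : ℝ, cexp (Z * x + ((-(Real.pi ^ 2 * Real.exp (2 * x)) : ℝ) : ℂ)) =
      1 / 2 * cexp (-(Z * Real.log Real.pi)) * expKernelInt 0 (-(Z / 2)) := by
  have h := Measure.integral_comp_mul_left
    (fun x : ℝ => cexp (Z * x + ((-(Real.pi ^ 2 * Real.exp (2 * x)) : ℝ) : ℂ))) (-1 / 2)
  have h2 := integral_add_right_eq_self (μ := volume)
    (fun y : ℝ => cexp (Z * ((-1 / 2 * y : ℝ) : ℂ) +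
      ((-(Real.pi ^ 2 * Real.exp (2 * (-1 / 2 * y))) : ℝ) : ℂ))) (2 * Real.log Real.pi)
  have h3 : ∫ x : ℝ, cexp (Z * x + ((-(Real.pi ^ 2 * Real.exp (2 * x)) : ℝ) : ℂ)) =
      1 / 2 * ∫ y : ℝ, cexp (Z * ((-1 / 2 * y : ℝ) : ℂ) +
      ((-(Real.pi ^ 2 * Real.exp (2 * (-1 / 2 * y))) : ℝ) : ℂ)) := by
    rw [h, show |(-1 / 2 : ℝ)⁻¹| = 2 by norm_num [abs_of_neg], Complex.real_smul]
    push_cast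
    ring
  rw [h3, ← h2, mul_assoc]
  congr 1
  rw [expKernelInt, ← integral_const_mul]
  congr 1
  ext y
  rw [← Complex.exp_add]
  congr 1
  have : Real.pi ^ 2 * Real.exp (2 * (-1 / 2 * (y + 2 * Real.log Real.pi))) = Real.exp (-y) := by
    rw [show 2 * (-1 / 2 * (y + 2 * Real.log Real.pi)) = -y - (Real.log Real.pi + Real.log Real.pi)
      by ring, Real.exp_sub, Real.exp_add, Real.exp_log Real.pi_pos]
    field_simp
  rw [this]
  push_cast
  ring

theorem integral_mul_fin_succ {k : ℕ} (u : ℝ → ℂ) (v : (Fin k → ℝ) → ℂ) :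
    ∫ x : Fin (k + 1) → ℝ, u (x 0) * v (fun j => x j.succ) = (∫ t, u t) * ∫ y, v y := by
  have h := (volume_preserving_piFinSuccAbove (fun _ : Fin (k + 1) => ℝ) 0).integral_comp'
    (fun p : ℝ × (Fin k → ℝ) => u p.1 * v p.2)
  rw [← integral_prod_mul u v]
  exact h

/-- The translation which decouples the variables of `whitKer`. -/
def whitShift {k : ℕ} (τ : Fin (k + 1) → ℝ) : Fin (k + 1) → ℝ :=
  Fin.cons (-(τ 0 / 2)) fun j : Fin k => -((τ j.succ - τ j.castSucc) / 2)

/-- Shift a tuple to the left, padding with `0`. -/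
def shiftLeft {k : ℕ} (Z : Fin (k + 1) → ℂ) : Fin (k + 1) → ℂ :=
  Fin.snoc (α := fun _ => ℂ) (fun j : Fin k => Z j.succ) 0

/-- The coefficients of `e^{τ_j}` in the decoupled form of `whitKer`. -/
def whitCoeff {k : ℕ} (l : Fin k → ℝ) : Fin (k + 1) → ℝ :=
  Fin.snoc (α := fun _ => ℝ) (fun j : Fin k => Real.pi ^ 2 * Real.exp (2 * l j)) 0

theorem sum_mul_whitShift {k : ℕ} (Z : Fin (k + 1) → ℂ) (τ : Fin (k + 1) → ℝ) :
    ∑ j, Z j * (whitShift τ j : ℝ) = -∑ j, (Z j - shiftLeft Z j) / 2 * τ j := by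
  have h1 : ∑ j, (Z j - shiftLeft Z j) / 2 * τ j =
      (∑ j, Z j * τ j) / 2 - (∑ j, shiftLeft Z j * τ j) / 2 := by
    rw [Finset.sum_div, Finset.sum_div, ← Finset.sum_sub_distrib]
    exact Finset.sum_congr rfl fun j _ => by ring
  have h2 : ∑ j, shiftLeft Z j * τ j = ∑ j : Fin k, Z j.succ * τ j.castSucc := by
    rw [Fin.sum_univ_castSucc]
    simp [shiftLeft]
  have h3 : ∑ j, Z j * (whitShift τ j : ℝ) = -(Z 0 * τ 0 / 2) -
      ((∑ j : Fin k, Z j.succ * τ j.succ) / 2 - (∑ j : Fin k, Z j.succ * τ j.castSucc) / 2) := by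
    rw [Fin.sum_univ_succ, Finset.sum_div, Finset.sum_div, ← Finset.sum_sub_distrib,
      sub_eq_add_neg, ← Finset.sum_neg_distrib]
    simp only [whitShift, Fin.cons_zero, Fin.cons_succ]
    congr 1
    · push_cast; ring
    · exact Finset.sum_congr rfl fun j _ => by push_cast; ring
  rw [h1, h2, h3, Fin.sum_univ_succ (fun j => Z j * (τ j : ℂ))]
  ring

theorem sum_exp_whitShift {k : ℕ} (x τ : Fin (k + 1) → ℝ) :
    ∑ j, Real.pi ^ 2 * Real.exp (2 * (x + whitShift τ) j + τ j) =
      Real.pi ^ 2 * Real.exp (2 * x 0) +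
        ∑ j, whitCoeff (fun j : Fin k => x j.succ) j * Real.exp (τ j) := by
  rw [Fin.sum_univ_succ, Fin.sum_univ_castSucc]
  simp only [whitShift, whitCoeff, Pi.add_apply, Fin.cons_zero, Fin.cons_succ, Fin.snoc_castSucc,
    Fin.snoc_last, zero_mul, add_zero, mul_assoc, ← Real.exp_add]
  congr 1
  · congr 2; ring
  · refine Finset.sum_congr rfl fun j _ => ?_
    congr 2; ring

theorem whitKer_whitShift {k : ℕ} (Ψ : (Fin k → ℝ) → ℂ) (B Z : Fin (k + 1) → ℂ)
    (x τ : Fin (k + 1) → ℝ) :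
    whitKer k Ψ B (x + whitShift τ) τ * cexp (∑ j, Z j * ((x + whitShift τ) j : ℝ)) =
      cexp (Z 0 * x 0 + ((-(Real.pi ^ 2 * Real.exp (2 * x 0)) : ℝ) : ℂ)) *
        (Ψ (fun j => x j.succ) * cexp (∑ j : Fin k, Z j.succ * x j.succ)) *
        ∏ j, cexp (((-(whitCoeff (fun j : Fin k => x j.succ) j * Real.exp (τ j)) -
          Real.exp (-τ j) : ℝ) : ℂ) + (B j - (Z j - shiftLeft Z j) / 2) * τ j) := by
  have hΨ : (fun j : Fin k => (x + whitShift τ) j.succ + (τ j.succ - τ j.castSucc) / 2) =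
      fun j => x j.succ := by
    ext j
    simp [whitShift]
  have hE := congrArg (fun r : ℝ => (r : ℂ)) (sum_exp_whitShift x τ)
  simp only [Complex.ofReal_add, Complex.ofReal_sum] at hE
  have hS := sum_mul_whitShift Z τ
  rw [whitKer, hΨ, ← Complex.exp_sum, ← Complex.exp_sum]
  have key : (∑ j, (((-(Real.pi ^ 2 * Real.exp (2 * (x + whitShift τ) j + τ j)) -
        Real.exp (-τ j) : ℝ) : ℂ) + B j * τ j)) + ∑ j, Z j * ((x + whitShift τ) j : ℝ) =
      (Z 0 * x 0 + ((-(Real.pi ^ 2 * Real.exp (2 * x 0)) : ℝ) : ℂ)) +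
        ∑ j : Fin k, Z j.succ * x j.succ +
        ∑ j, ((((-(whitCoeff (fun j : Fin k => x j.succ) j * Real.exp (τ j)) -
          Real.exp (-τ j) : ℝ) : ℂ) + (B j - (Z j - shiftLeft Z j) / 2) * τ j)) := by
    have e1 : ∑ j, Z j * ((x + whitShift τ) j : ℝ) = ∑ j, Z j * x j +
        ∑ j, Z j * (whitShift τ j : ℝ) := by
      rw [← Finset.sum_add_distrib]
      exact Finset.sum_congr rfl fun j _ => by rw [Pi.add_apply]; push_cast; ring
    rw [e1, Fin.sum_univ_succ (fun j => Z j * (x j : ℂ)), hS]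
    simp only [Complex.ofReal_sub, Complex.ofReal_neg, sub_mul (B _), Finset.sum_add_distrib,
      Finset.sum_sub_distrib, Finset.sum_neg_distrib]
    rw [hE]
    ring
  have key' := congrArg cexp key
  rw [Complex.exp_add, Complex.exp_add, Complex.exp_add] at key'
  linear_combination Ψ (fun j => x j.succ) * key'

theorem integral_whitStep_mul_cexp {k : ℕ} {Ψ : (Fin k → ℝ) → ℂ} (hΨ : WhitBound k Ψ)
    (hc : Continuous Ψ) (κ : ℂ) {A B : Fin (k + 1) → ℂ} (hA : ∀ j, (A j).re = 0)
    (hB : ∀ j, (B j).re = 0) {S : Fin (k + 1) → ℂ} (hS : ∀ j, 0 < (S j).re) :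
    ∫ x : Fin (k + 1) → ℝ, whitStep k Ψ κ A B x * cexp (∑ j, S j * x j) =
      κ * ((∫ u : ℝ, cexp ((A 0 + S 0) * u + ((-(Real.pi ^ 2 * Real.exp (2 * u)) : ℝ) : ℂ))) *
        ∫ l : Fin k → ℝ, Ψ l * cexp (∑ j, (A j.succ + S j.succ) * l j) *
          ∏ j, expKernelInt (whitCoeff l j)
            (B j - (A j + S j - shiftLeft (A + S) j) / 2)) := by
  set Z := A + S with hZ
  have hZre : ∀ j, (Z j).re = (S j).re := fun j => by simp [hZ, hA]
  let F : (Fin (k + 1) → ℝ) × (Fin (k + 1) → ℝ) → ℂ := fun p =>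
    whitKer k Ψ B p.2 p.1 * cexp (∑ j, Z j * (p.2 j : ℝ))
  have hcK := continuous_whitKer hc B
  have hFc : Continuous F :=
    (hcK.comp (continuous_snd.prodMk continuous_fst)).mul (by fun_prop)
  have hF : Integrable F (volume.prod volume) := by
    obtain ⟨G, hG, hG0, h⟩ := exists_le_exp_neg_abs (μ := volume)
      (f := fun x τ => ‖whitKer k Ψ B x τ‖) (fun _ _ => norm_nonneg _)
      (exists_whitKer_bound hΨ hB) hS
    refine (hG.mul_prod (integrable_prod_exp_neg_abs fun j => half_pos (hS j))).mono'
      hFc.aestronglyMeasurable (Filter.Eventually.of_forall fun p => ?_)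
    have he : ‖cexp (∑ j, Z j * (p.2 j : ℝ))‖ = Real.exp (∑ j, (S j).re * p.2 j) := by
      rw [Complex.norm_exp]
      simp [hZre]
    simp only [F]
    rw [norm_mul, he]
    refine (mul_le_mul_of_nonneg_right (h p.2 p.1) (Real.exp_pos _).le).trans (le_of_eq ?_)
    have : Real.exp (-∑ j, (S j).re * p.2 j) * Real.exp (∑ j, (S j).re * p.2 j) = 1 := by
      rw [← Real.exp_add]; simp
    linear_combination (∏ j, Real.exp (-((S j).re / 2 * |p.2 j|))) * G p.1 * this
  have hsh : Continuous (whitShift (k := k)) := by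
    refine continuous_pi fun j => ?_
    refine Fin.cases ?_ (fun j => ?_) j
    · simp only [whitShift, Fin.cons_zero]; fun_prop
    · simp only [whitShift, Fin.cons_succ]; fun_prop
  have hF' := integrable_shear hsh.measurable hF
  calc _ = κ * ∫ x : Fin (k + 1) → ℝ, ∫ τ, F (τ, x) := by
        rw [← integral_const_mul]
        congr 1
        ext x
        simp only [F, whitStep]
        rw [integral_mul_const]
        simp only [hZ, Pi.add_apply, add_mul, Finset.sum_add_distrib, Complex.exp_add]
        ring
    _ = κ * ∫ τ, ∫ x : Fin (k + 1) → ℝ, F (τ, x) := by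
        rw [integral_integral_swap (f := fun τ x => F (τ, x)) hF]
    _ = κ * ∫ τ, ∫ x : Fin (k + 1) → ℝ, F (τ, x + whitShift τ) := by
        congr 2
        ext τ
        exact (integral_add_right_eq_self (fun x => F (τ, x)) (whitShift τ)).symm
    _ = κ * ∫ x : Fin (k + 1) → ℝ, ∫ τ, F (τ, x + whitShift τ) := by
        rw [integral_integral_swap (f := fun τ x => F (τ, x + whitShift τ)) hF']
    _ = _ := by
        congr 1
        rw [← integral_mul_fin_succ]
        congr 1
        ext x
        simp only [F]
        simp_rw [whitKer_whitShift]
        rw [integral_const_mul, integral_fintype_prod_volume_eq_prod (𝕜 := ℂ) (fun j (t : ℝ) =>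
          cexp (((-(whitCoeff (fun j : Fin k => x j.succ) j * Real.exp t) -
          Real.exp (-t) : ℝ) : ℂ) + (B j - (Z j - shiftLeft Z j) / 2) * t))]
        rw [mul_assoc]
        rfl

theorem exists_norm_integral_exp_le {σ : ℝ} (hσ : 0 < σ) :
    ∃ C : ℝ, 0 ≤ C ∧ ∀ Z : ℂ, Z.re = σ →
      ‖∫ u : ℝ, cexp (Z * u + ((-(Real.pi ^ 2 * Real.exp (2 * u)) : ℝ) : ℂ))‖ ≤
        C * (1 + (Z.im / 2) ^ 2)⁻¹ := by
  obtain ⟨C, hC0, hC⟩ := exists_norm_expKernelInt_le (b := -(σ / 2)) (ρ := 0) (by linarith)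
  refine ⟨1 / 2 * Real.exp (-(σ * Real.log Real.pi)) * C, by positivity, fun Z hZ => ?_⟩
  have h := hC 0 1 (-(Z / 2)) le_rfl (by simp [hZ]) (by simp)
  rw [expKernelInt_eq, norm_mul, norm_mul, Complex.norm_exp]
  have h1 : (-(Z * (Real.log Real.pi : ℝ))).re = -(σ * Real.log Real.pi) := by simp [hZ]
  have h2 : (-(Z / 2)).im ^ 2 = (Z.im / 2) ^ 2 := by simp
  rw [h2] at h
  rw [h1, mul_assoc (_ * _) C]
  norm_num
  exact mul_le_mul_of_nonneg_left (by simpa using h) (by positivity)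

theorem exists_norm_integral_whitStep_le {k : ℕ} {Ψ : (Fin k → ℝ) → ℂ} (hΨ : WhitBound k Ψ)
    (hc : Continuous Ψ) (κ : ℂ) {A B : Fin (k + 1) → ℂ} (hA : ∀ j, (A j).re = 0)
    (hB : ∀ j, (B j).re = 0) {σ : Fin (k + 1) → ℝ} (hσ : ∀ j, 0 < σ j) :
    ∃ C : ℝ, 0 ≤ C ∧ ∀ S : Fin (k + 1) → ℂ, (∀ j, (S j).re = σ j) →
      ‖∫ x : Fin (k + 1) → ℝ, whitStep k Ψ κ A B x * cexp (∑ j, S j * x j)‖ ≤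
        C * ((1 + ((A 0 + S 0).im / 2) ^ 2)⁻¹ *
          ∏ j, (1 + (B j - (A j + S j - shiftLeft (A + S) j) / 2).im ^ 2)⁻¹) := by
  let b : Fin (k + 1) → ℝ := Fin.snoc (α := fun _ => ℝ)
    (fun j : Fin k => (σ j.succ - σ j.castSucc) / 2) (-(σ (Fin.last k) / 2))
  let ρ₀ : Fin k → ℝ := fun j => (max ((σ j.succ - σ j.castSucc) / 2) 0 + σ j.succ / 2) / 2
  let ρ : Fin (k + 1) → ℝ := Fin.snoc (α := fun _ => ℝ) ρ₀ 0
  have hmax : ∀ j : Fin k, max ((σ j.succ - σ j.castSucc) / 2) 0 < σ j.succ / 2 := fun j => by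
    have h1 := hσ j.succ
    have h2 := hσ j.castSucc
    exact max_lt (by linarith) (by linarith)
  have hρ₀ : ∀ j, 0 < ρ₀ j := fun j => by
    have h1 := hσ j.succ
    have h2 := le_max_right ((σ j.succ - σ j.castSucc) / 2) 0
    simp only [ρ₀]
    linarith
  have hρ₁ : ∀ j : Fin k, 0 < σ j.succ - 2 * ρ₀ j := fun j => by
    have h2 := hmax j
    simp only [ρ₀]
    linarith
  have hbρ : ∀ j, b j < ρ j := by
    refine Fin.lastCases ?_ fun j => ?_
    · simp only [b, ρ, Fin.snoc_last]
      have := hσ (Fin.last k)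
      linarith
    · simp only [b, ρ, Fin.snoc_castSucc, ρ₀]
      have h1 := hmax j
      have h2 := le_max_left ((σ j.succ - σ j.castSucc) / 2) 0
      linarith
  choose C hC0 hC using fun j => exists_norm_expKernelInt_le (hbρ j)
  choose D hD0 hD using fun j => exists_exp_neg_mul_exp_le
    (c := Real.pi ^ 2 / 2) (by positivity) (hρ₀ j)
  obtain ⟨C₀, hC₀, hJ₀⟩ := exists_norm_integral_exp_le (hσ 0)
  have hI := (hΨ.integrable_mul_cexp hc
    (S := fun j => ((σ j.succ - 2 * ρ₀ j : ℝ) : ℂ)) (fun j => by simpa using hρ₁ j)).norm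
  set E := ∫ l : Fin k → ℝ, ‖Ψ l * cexp (∑ j, ((σ j.succ - 2 * ρ₀ j : ℝ) : ℂ) * l j)‖ with hE
  have hE0 : 0 ≤ E := integral_nonneg fun _ => norm_nonneg _
  have hDpos : 0 ≤ ∏ j, D j := Finset.prod_nonneg fun j _ => (hD0 j).le
  have hCpos : 0 ≤ ∏ j, C j := Finset.prod_nonneg fun j _ => hC0 j
  refine ⟨‖κ‖ * (C₀ * (E * ((∏ j, D j) * ∏ j, C j))), by positivity, fun S hS => ?_⟩
  set β : Fin (k + 1) → ℂ := fun j => B j - (A j + S j - shiftLeft (A + S) j) / 2 with hβ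
  have hβre : ∀ j, (β j).re = b j := by
    refine Fin.lastCases ?_ fun j => ?_
    · simp [hβ, b, shiftLeft, hA, hB, hS]
    · simp [hβ, b, shiftLeft, hA, hB, hS]
      ring
  have hK : ∀ l j, ‖expKernelInt (whitCoeff l j) (β j)‖ ≤
      C j * (Fin.snoc (α := fun _ => ℝ) (fun j : Fin k => D j * Real.exp (-(2 * ρ₀ j * l j))) 1 :
        Fin (k + 1) → ℝ) j * (1 + (β j).im ^ 2)⁻¹ := by
    intro l
    refine Fin.lastCases ?_ fun j => ?_
    · refine hC _ _ _ _ ?_ (hβre _) fun τ => ?_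
      · simp [whitCoeff]
      · simp [whitCoeff, ρ]
    · refine hC _ _ _ _ ?_ (hβre _) fun τ => ?_
      · simp only [whitCoeff, Fin.snoc_castSucc]; positivity
      · simp only [whitCoeff, Fin.snoc_castSucc, ρ]
        have h := hD j (2 * l j + τ)
        refine le_trans (le_of_eq ?_) (h.trans (le_of_eq ?_))
        · rw [Real.exp_add]; congr 1; ring
        · rw [mul_assoc, ← Real.exp_add]; congr 2; ring
  have hin : ∀ l, ‖Ψ l * cexp (∑ j, (A j.succ + S j.succ) * l j) *
      ∏ j, expKernelInt (whitCoeff l j) (β j)‖ ≤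
      ‖Ψ l * cexp (∑ j, ((σ j.succ - 2 * ρ₀ j : ℝ) : ℂ) * l j)‖ *
        ((∏ j, D j) * (∏ j, C j) * ∏ j, (1 + (β j).im ^ 2)⁻¹) := fun l => by
    have hp : ‖∏ j, expKernelInt (whitCoeff l j) (β j)‖ ≤ _ :=
      (norm_prod _ _).trans_le
        (Finset.prod_le_prod (fun _ _ => norm_nonneg _) fun j _ => hK l j)
    rw [norm_mul, norm_mul, norm_mul, Complex.norm_exp, Complex.norm_exp]
    refine (mul_le_mul_of_nonneg_left hp (by positivity)).trans (le_of_eq ?_)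
    rw [Finset.prod_mul_distrib, Finset.prod_mul_distrib, Fin.prod_univ_castSucc
      (fun j => (Fin.snoc (α := fun _ => ℝ) (fun j : Fin k => D j * Real.exp (-(2 * ρ₀ j * l j))) 1 :
        Fin (k + 1) → ℝ) j)]
    simp only [Fin.snoc_castSucc, Fin.snoc_last, mul_one, Finset.prod_mul_distrib, ← Real.exp_sum]
    have h1 : Real.exp (∑ j, (A j.succ + S j.succ) * l j : ℂ).re *
        Real.exp (∑ j, -(2 * ρ₀ j * l j)) =
        Real.exp (∑ j, ((σ j.succ - 2 * ρ₀ j : ℝ) : ℂ) * l j : ℂ).re := by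
      rw [← Real.exp_add]
      congr 1
      simp only [Complex.re_sum, Complex.re_mul_ofReal, Complex.add_re, hA, hS, zero_add,
        Complex.ofReal_re]
      rw [← Finset.sum_add_distrib]
      exact Finset.sum_congr rfl fun j _ => by ring
    rw [← h1]
    ring
  have hInt : ‖∫ l : Fin k → ℝ, Ψ l * cexp (∑ j, (A j.succ + S j.succ) * l j) *
      ∏ j, expKernelInt (whitCoeff l j) (β j)‖ ≤
      E * ((∏ j, D j) * (∏ j, C j) * ∏ j, (1 + (β j).im ^ 2)⁻¹) := by
    rw [hE, ← integral_mul_const]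
    exact norm_integral_le_of_norm_le (hI.mul_const _) (Filter.Eventually.of_forall hin)
  rw [integral_whitStep_mul_cexp hΨ hc κ hA hB (fun j => by rw [hS]; exact hσ j), norm_mul,
    norm_mul]
  have h0 := hJ₀ (A 0 + S 0) (by simp [hA, hS])
  refine (mul_le_mul_of_nonneg_left (mul_le_mul h0 hInt (norm_nonneg _) (by positivity))
    (norm_nonneg κ)).trans (le_of_eq (by ring))

theorem exists_norm_mellin_logWhitt_le (k : ℕ) (a : ℕ → ℂ) (ha : ∀ j < k + 2, (a j).re = 0)
    {σ : Fin (k + 1) → ℝ} (hσ : ∀ j, 0 < σ j) :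
    ∃ (C : ℝ) (d : ℕ → ℝ), 0 ≤ C ∧ ∀ S : ℕ → ℂ, (∀ j : Fin (k + 1), (S j).re = σ j) →
      S (k + 1) = 0 →
      ‖∫ x : Fin (k + 1) → ℝ, logWhitt (k + 1) a x * cexp (∑ j : Fin (k + 1), S j * x j)‖ ≤
        C * ((1 + (d 0 + (S 0).im / 2) ^ 2)⁻¹ * ∏ j ∈ Finset.range (k + 1),
          (1 + (d (j + 1) + ((S (j + 1)).im - (S j).im) / 2) ^ 2)⁻¹) := by
  obtain ⟨Ψ, κ, A, B, hA, hB, hc, hΨ, he⟩ := logWhitt_eq_whitStep k a ha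
  obtain ⟨C, hC, h⟩ := exists_norm_integral_whitStep_le hΨ hc κ hA hB hσ
  refine ⟨C, fun r => Nat.casesOn r ((A 0).im / 2) fun j => if hj : j < k + 1 then
    (B ⟨j, hj⟩ - (A ⟨j, hj⟩ - shiftLeft A ⟨j, hj⟩) / 2).im else 0, hC, fun S hS hS0 => ?_⟩
  rw [he]
  refine (h (fun j => S j) hS).trans (le_of_eq ?_)
  rw [Finset.prod_range]
  congr 2
  · simp [add_div]
  · refine Finset.prod_congr rfl fun j _ => ?_
    have hs : shiftLeft (A + fun j : Fin (k + 1) => S j) j = shiftLeft A j + S (j + 1) := by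
      refine Fin.lastCases ?_ (fun j => ?_) j
      · simp [shiftLeft, hS0]
      · simp [shiftLeft]
    rw [hs]
    congr 3
    simp only [Fin.is_lt, dif_pos, Fin.eta, Complex.sub_im, Complex.add_im, Complex.div_ofNat_im]
    ring

open scoped FourierTransform in
theorem integral_integral_mul_cexp_eq {N : ℕ} {h : (Fin N → ℝ) → ℂ} (hh : Integrable h)
    (h0 : ContinuousAt h 0)
    (hF : Integrable fun t : Fin N → ℝ => ∫ x, h x * cexp (I * ∑ j, (t j : ℂ) * x j)) :
    ∫ t : Fin N → ℝ, ∫ x, h x * cexp (I * ∑ j, (t j : ℂ) * x j) =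
      (2 * Real.pi : ℂ) ^ N * h 0 := by
  set F : (Fin N → ℝ) → ℂ := fun t => ∫ x, h x * cexp (I * ∑ j, (t j : ℂ) * x j) with hFdef
  let e := @WithLp.ofLp 2 (Fin N → ℝ)
  have hmp : MeasurePreserving e volume volume := PiLp.volume_preserving_ofLp (Fin N)
  have hme : MeasurableEmbedding e := (MeasurableEquiv.toLp 2 (Fin N → ℝ)).symm.measurableEmbedding
  have hI : Integrable (h ∘ e) := hmp.integrable_comp_of_integrable hh
  have hfour : ∀ w : EuclideanSpace ℝ (Fin N), 𝓕 (h ∘ e) w = F ((-(2 * Real.pi)) • e w) :=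
      fun w => by
    rw [Real.fourier_eq', hFdef]
    simp only
    rw [← hmp.integral_comp hme]
    refine integral_congr_ae (Filter.Eventually.of_forall fun v => ?_)
    simp only [Function.comp_apply, smul_eq_mul, PiLp.inner_apply, Pi.smul_apply]
    rw [mul_comm]
    congr 2
    push_cast
    rw [Finset.mul_sum, Finset.mul_sum, Finset.sum_mul]
    refine Finset.sum_congr rfl fun j _ => ?_
    simp only [RCLike.inner_apply, conj_trivial, e]
    push_cast
    ring
  have h2pi : (2 * Real.pi : ℝ) ≠ 0 := by positivity
  have hIF : Integrable (𝓕 (h ∘ e)) := by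
    rw [funext hfour]
    exact hmp.integrable_comp_of_integrable
      ((integrable_comp_smul_iff volume F (neg_ne_zero.2 h2pi)).2 hF)
  have hc : ContinuousAt (h ∘ e) 0 :=
    ContinuousAt.comp (f := e) (g := h) h0 (PiLp.continuous_ofLp 2 _).continuousAt
  have key := hI.fourierInv_fourier_eq hIF hc
  rw [Real.fourierInv_eq'] at key
  simp only [inner_zero_right, mul_zero, Complex.ofReal_zero, zero_mul, Complex.exp_zero,
    one_smul] at key
  rw [funext hfour, hmp.integral_comp hme (fun x => F ((-(2 * Real.pi)) • x)),
    Measure.integral_comp_smul, Module.finrank_fintype_fun_eq_card, Fintype.card_fin, abs_inv,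
    abs_pow, abs_neg, abs_of_pos Real.two_pi_pos] at key
  have hk : (h ∘ e) 0 = h 0 := rfl
  rw [← hk, ← key, Complex.real_smul]
  push_cast
  rw [← mul_assoc, mul_inv_cancel₀, one_mul]
  exact pow_ne_zero _ (by exact_mod_cast h2pi)

/-- `Fin.append` as a measurable equivalence. -/
def appendEquiv (a b : ℕ) : (Fin a → ℝ) × (Fin b → ℝ) ≃ᵐ (Fin (a + b) → ℝ) :=
  (MeasurableEquiv.sumPiEquivProdPi fun _ : Fin a ⊕ Fin b => ℝ).symm.trans
    (MeasurableEquiv.piCongrLeft (fun _ => ℝ) finSumFinEquiv)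

theorem appendEquiv_apply {a b : ℕ} (u : Fin a → ℝ) (v : Fin b → ℝ) :
    appendEquiv a b (u, v) = Fin.append u v := by
  ext j
  obtain ⟨j, rfl⟩ := finSumFinEquiv.surjective j
  refine (Equiv.piCongrLeft_apply_apply (P := fun _ => ℝ) (e := finSumFinEquiv)
    ((MeasurableEquiv.sumPiEquivProdPi fun _ : Fin a ⊕ Fin b => ℝ).symm (u, v)) j).trans ?_
  rcases j with j | j
  · simp [MeasurableEquiv.coe_sumPiEquivProdPi_symm]
  · simp [MeasurableEquiv.coe_sumPiEquivProdPi_symm]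

theorem measurePreserving_appendEquiv (a b : ℕ) : MeasurePreserving (appendEquiv a b) :=
  (volume_measurePreserving_piCongrLeft (fun _ => ℝ) finSumFinEquiv).comp
    (volume_measurePreserving_sumPiEquivProdPi_symm fun _ : Fin a ⊕ Fin b => ℝ)

theorem integral_append {a b : ℕ} {F : (Fin (a + b) → ℝ) → ℂ} (hF : Integrable F) :
    ∫ x, F x = ∫ u : Fin a → ℝ, ∫ v : Fin b → ℝ, F (Fin.append u v) := by
  rw [← (measurePreserving_appendEquiv a b).integral_comp' F, Measure.volume_eq_prod,
    integral_prod]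
  · simp only [appendEquiv_apply]
  · exact (measurePreserving_appendEquiv a b).integrable_comp_of_integrable hF

theorem integral_append_mul {a b : ℕ} (f : (Fin a → ℝ) → ℂ) (g : (Fin b → ℝ) → ℂ) :
    ∫ x : Fin (a + b) → ℝ, f (fun i => x (Fin.castAdd b i)) * g (fun i => x (Fin.natAdd a i)) =
      (∫ u, f u) * ∫ v, g v := by
  rw [← (measurePreserving_appendEquiv a b).integral_comp'
    (fun x => f (fun i => x (Fin.castAdd b i)) * g (fun i => x (Fin.natAdd a i))),
    Measure.volume_eq_prod, ← integral_prod_mul]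
  refine integral_congr_ae (Filter.Eventually.of_forall fun ⟨u, v⟩ => ?_)
  simp only [appendEquiv_apply, Fin.append_left, Fin.append_right]

theorem integrable_comp_injective {N : ℕ} (T : (Fin N → ℝ) →ₗ[ℝ] (Fin N → ℝ))
    (hT : Function.Injective T) {g : (Fin N → ℝ) → ℝ} (hg : Integrable g) :
    Integrable (g ∘ T) := by
  have hdet : LinearMap.det T ≠ 0 :=
    (LinearEquiv.isUnit_det' (LinearEquiv.ofInjectiveEndo T hT)).ne_zero
  have hm := Measure.map_linearMap_addHaar_eq_smul_addHaar (volume : Measure (Fin N → ℝ)) hdet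
  have hT' : AEMeasurable T volume := (LinearMap.continuous_on_pi T).measurable.aemeasurable
  have : Integrable g (Measure.map T volume) := by
    rw [hm]
    exact hg.smul_measure ENNReal.ofReal_ne_top
  exact this.comp_aemeasurable hT'

theorem integrable_inv_one_add_sq_shift (d : ℝ) :
    Integrable fun y : ℝ => (1 + (d + y / 2) ^ 2)⁻¹ :=
  (integrable_inv_one_add_sq.comp_add_left d).comp_div two_ne_zero

/-- Differences of adjacent coordinates, with the coordinates below `p` and those from `p`
onwards treated as two separate blocks vanishing at the outer ends. -/
def blockDiff (p q : ℕ) : (Fin (p + q) → ℝ) →ₗ[ℝ] (Fin (p + q) → ℝ) where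
  toFun t i := (if (i : ℕ) < p then (if (i : ℕ) = 0 then 0 else extR0 t (i - 1))
    else extR0 t (i + 1)) - t i
  map_add' s t := by
    ext i
    simp only [extR0, Pi.add_apply]
    split_ifs <;> ring
  map_smul' r t := by
    ext i
    simp only [extR0, Pi.smul_apply, smul_eq_mul, RingHom.id_apply]
    split_ifs <;> ring

theorem blockDiff_apply (p q : ℕ) (t : Fin (p + q) → ℝ) (i : Fin (p + q)) :
    blockDiff p q t i = (if (i : ℕ) < p then (if (i : ℕ) = 0 then 0 else extR0 t (i - 1))
      else extR0 t (i + 1)) - t i := rfl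

theorem extR0_coe {k : ℕ} (t : Fin k → ℝ) (j : Fin k) : extR0 t j = t j := by
  simp [extR0]

theorem extR0_of_lt {k : ℕ} (t : Fin k → ℝ) {j : ℕ} (hj : j < k) : extR0 t j = t ⟨j, hj⟩ := by
  simp [extR0, hj]

theorem blockDiff_injective (p q : ℕ) : Function.Injective (blockDiff p q) := by
  refine (injective_iff_map_eq_zero _).2 fun t ht => ?_
  have h1 : ∀ i, i < p → extR0 t i = 0 := by
    intro i
    induction i with
    | zero =>
      intro hi
      have := congrFun ht ⟨0, by omega⟩
      rw [blockDiff_apply] at this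
      simp only [hi, if_true, Pi.zero_apply, zero_sub, neg_eq_zero] at this
      rw [extR0_of_lt t (by omega), this]
    | succ i ih =>
      intro hi
      have := congrFun ht ⟨i + 1, by omega⟩
      rw [blockDiff_apply] at this
      simp only [hi, if_true, Pi.zero_apply, Nat.succ_ne_zero, if_false, Nat.add_sub_cancel,
        ih (by omega), zero_sub, neg_eq_zero] at this
      rw [extR0_of_lt t (by omega), this]
  have h2 : ∀ m i, p ≤ i → p + q ≤ i + m → extR0 t i = 0 := by
    intro m
    induction m with
    | zero =>
      intro i hi hm
      simp [extR0, show ¬ i < p + q by omega]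
    | succ m ih =>
      intro i hi hm
      by_cases hlt : i < p + q
      · have := congrFun ht ⟨i, hlt⟩
        rw [blockDiff_apply] at this
        simp only [show ¬ i < p by omega, if_false, ih (i + 1) (by omega) (by omega),
          Pi.zero_apply, zero_sub, neg_eq_zero] at this
        rw [extR0_of_lt t hlt, this]
      · simp [extR0, hlt]
  ext i
  rw [← extR0_coe t i, Pi.zero_apply]
  by_cases hi : (i : ℕ) < p
  · exact h1 _ hi
  · exact h2 (p + q) _ (by omega) (by omega)

theorem continuous_append (a b : ℕ) :
    Continuous fun p : (Fin a → ℝ) × (Fin b → ℝ) => Fin.append p.1 p.2 := by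
  refine continuous_pi fun j => ?_
  refine Fin.addCases (fun i => ?_) (fun i => ?_) j
  · simp only [Fin.append_left]; fun_prop
  · simp only [Fin.append_right]; fun_prop

theorem continuous_integral_mul_cexp {X Y : Type*} [TopologicalSpace X] [FirstCountableTopology X]
    [TopologicalSpace Y] [SecondCountableTopology Y] [MeasurableSpace Y] [BorelSpace Y]
    {μ : Measure Y} {f : Y → ℂ} (hf : Integrable f μ) {φ : X → Y → ℝ}
    (hφ : Continuous fun p : X × Y => φ p.1 p.2) :
    Continuous fun x => ∫ y, f y * cexp (I * φ x y) ∂μ := by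
  refine continuous_of_dominated (bound := fun y => ‖f y‖) (fun x => ?_) (fun x => ?_) hf.norm ?_
  · refine hf.aestronglyMeasurable.mul (Continuous.aestronglyMeasurable ?_)
    have : Continuous fun y => φ x y := hφ.comp (continuous_const.prodMk continuous_id)
    fun_prop
  · refine Filter.Eventually.of_forall fun y => ?_
    rw [norm_mul, mul_comm I, Complex.norm_exp_ofReal_mul_I, mul_one]
  · refine Filter.Eventually.of_forall fun y => ?_
    have : Continuous fun x => φ x y := hφ.comp (continuous_id.prodMk continuous_const)
    fun_prop

theorem integral_mul_eq_of_convolution {p q : ℕ} {f : (Fin (p + 1 + q) → ℝ) → ℂ}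
    {g : (Fin p → ℝ) → ℂ} (hfc : Continuous f) (hgc : Continuous g) {C D : ℝ} (hC : 0 ≤ C)
    (hD : 0 ≤ D) {η : Fin (p + 1 + q) → ℝ} {θ : Fin p → ℝ} (hη : ∀ j, 0 < η j)
    (hθ : ∀ j, 0 < θ j) (hf : ∀ y, ‖f y‖ ≤ C * ∏ j, Real.exp (-(η j * |y j|)))
    (hg : ∀ u, ‖g u‖ ≤ D * ∏ j, Real.exp (-(θ j * |u j|)))
    (hInt : Integrable fun t : Fin (p + q) → ℝ =>
      (∫ u, g u * cexp (I * ∑ i, (t (Fin.castAdd q i) : ℂ) * u i)) *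
        ∫ y, f y * cexp (I * (∑ i : Fin q, (t (Fin.natAdd p i) : ℂ) * y (Fin.natAdd (p + 1) i) -
          ∑ i : Fin p, (t (Fin.castAdd q i) : ℂ) * y (Fin.castAdd q i.castSucc)))) :
    ∫ t : Fin (p + q) → ℝ,
      (∫ u, g u * cexp (I * ∑ i, (t (Fin.castAdd q i) : ℂ) * u i)) *
        ∫ y, f y * cexp (I * (∑ i : Fin q, (t (Fin.natAdd p i) : ℂ) * y (Fin.natAdd (p + 1) i) -
          ∑ i : Fin p, (t (Fin.castAdd q i) : ℂ) * y (Fin.castAdd q i.castSucc))) =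
      (2 * Real.pi : ℂ) ^ (p + q) *
        ∫ ξ : Fin (p + 1) → ℝ, f (Fin.append ξ 0) * g (fun i => ξ i.castSucc) := by
  have happ := continuous_append (p + 1) q
  let L : (Fin (p + 1) → ℝ) → Fin (p + q) → ℝ := fun ξ => Fin.append (fun i => ξ i.castSucc) 0
  have hL : Continuous L := (continuous_append p q).comp
    ((by fun_prop : Continuous fun ξ : Fin (p + 1) → ℝ => fun i : Fin p => ξ i.castSucc).prodMk
      continuous_const)
  let R : (Fin (p + 1) → ℝ) → (Fin (p + q) → ℝ) → ℂ := fun ξ x =>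
    f (Fin.append ξ fun i => x (Fin.natAdd p i)) * g (fun i => x (Fin.castAdd q i))
  have hRc : Continuous fun z : (Fin (p + 1) → ℝ) × (Fin (p + q) → ℝ) => R z.1 z.2 := by
    refine Continuous.mul (hfc.comp (happ.comp (continuous_fst.prodMk ?_))) (hgc.comp ?_) <;>
    fun_prop
  let F₁ : (Fin (p + 1) → ℝ) → ℝ := fun ξ => C * ∏ i, Real.exp (-(η (Fin.castAdd q i) * |ξ i|))
  let F₂ : (Fin (p + q) → ℝ) → ℝ := fun x =>
    D * ∏ j, Real.exp (-((Fin.append θ fun i => η (Fin.natAdd (p + 1) i)) j * |x j|))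
  have hω : ∀ j, 0 < (Fin.append θ fun i : Fin q => η (Fin.natAdd (p + 1) i)) j := fun j => by
    refine Fin.addCases (fun i => ?_) (fun i => ?_) j
    · rw [Fin.append_left]; exact hθ i
    · rw [Fin.append_right]; exact hη _
  have hF₁ : Integrable F₁ := (integrable_prod_exp_neg_abs fun i => hη _).const_mul C
  have hF₂ : Integrable F₂ := (integrable_prod_exp_neg_abs hω).const_mul D
  have hF₁0 : ∀ ξ, 0 ≤ F₁ ξ := fun ξ => by positivity
  have hF₂D : ∀ x, F₂ x ≤ D := fun x => by
    refine mul_le_of_le_one_right hD (Finset.prod_le_one (fun _ _ => (Real.exp_pos _).le)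
      fun j _ => ?_)
    rw [Real.exp_le_one_iff, neg_nonpos]
    exact mul_nonneg (hω j).le (abs_nonneg _)
  have hR : ∀ ξ x, ‖R ξ x‖ ≤ F₁ ξ * F₂ x := fun ξ x => by
    rw [norm_mul]
    refine (mul_le_mul (hf _) (hg _) (norm_nonneg _) (by positivity)).trans (le_of_eq ?_)
    simp only [F₁, F₂, Fin.prod_univ_add, Fin.append_left, Fin.append_right]
    ring
  have hRint : Integrable (fun z : (Fin (p + 1) → ℝ) × (Fin (p + q) → ℝ) => R z.1 z.2)
      (volume.prod volume) :=
    (hF₁.mul_prod hF₂).mono' hRc.aestronglyMeasurable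
      (Filter.Eventually.of_forall fun z => hR z.1 z.2)
  have hfI : Integrable f := ((integrable_prod_exp_neg_abs hη).const_mul C).mono'
    hfc.aestronglyMeasurable (Filter.Eventually.of_forall hf)
  let h : (Fin (p + q) → ℝ) → ℂ := fun x => ∫ ξ, R ξ (x + L ξ)
  have hh : Integrable h := (integrable_shear hL.measurable hRint).integral_prod_right
  have hhc : Continuous h := by
    refine continuous_of_dominated (bound := fun ξ => F₁ ξ * D) (fun x => ?_) (fun x => ?_)
      (hF₁.mul_const D) ?_
    · exact (hRc.comp (continuous_id.prodMk (continuous_const.add hL))).aestronglyMeasurable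
    · exact Filter.Eventually.of_forall fun ξ =>
        (hR _ _).trans (mul_le_mul_of_nonneg_left (hF₂D _) (hF₁0 ξ))
    · exact Filter.Eventually.of_forall fun ξ =>
        hRc.comp (continuous_const.prodMk (continuous_id.add continuous_const))
  have hhat : ∀ t : Fin (p + q) → ℝ, ∫ x, h x * cexp (I * ∑ j, (t j : ℂ) * x j) =
      (∫ u, g u * cexp (I * ∑ i, (t (Fin.castAdd q i) : ℂ) * u i)) *
        ∫ y, f y * cexp (I * (∑ i : Fin q, (t (Fin.natAdd p i) : ℂ) * y (Fin.natAdd (p + 1) i) -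
          ∑ i : Fin p, (t (Fin.castAdd q i) : ℂ) * y (Fin.castAdd q i.castSucc))) := by
    intro t
    let k : (Fin (p + 1 + q) → ℝ) → ℂ := fun y => f y * cexp (I *
      (∑ i : Fin q, (t (Fin.natAdd p i) : ℂ) * y (Fin.natAdd (p + 1) i) -
          ∑ i : Fin p, (t (Fin.castAdd q i) : ℂ) * y (Fin.castAdd q i.castSucc)))
    have hk : Integrable k := by
      refine hfI.norm.mono' (by fun_prop) (Filter.Eventually.of_forall fun y => le_of_eq ?_)
      simp only [k]
      rw [norm_mul, Complex.norm_exp]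
      simp
    let Q : (Fin (p + 1) → ℝ) × (Fin (p + q) → ℝ) → ℂ := fun z =>
      R z.1 z.2 * cexp (I * ∑ j, (t j : ℂ) * ((z.2 j - L z.1 j : ℝ) : ℂ))
    have hQc : Continuous Q := by
      have h1 : Continuous fun z : (Fin (p + 1) → ℝ) × (Fin (p + q) → ℝ) => L z.1 :=
        hL.comp continuous_fst
      refine hRc.mul ?_
      fun_prop
    have hQ : Integrable Q (volume.prod volume) := by
      refine hRint.norm.mono' hQc.aestronglyMeasurable
        (Filter.Eventually.of_forall fun z => le_of_eq ?_)
      simp only [Q]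
      rw [norm_mul, Complex.norm_exp]
      simp
    calc _ = ∫ x, ∫ ξ, Q (ξ, x + L ξ) := by
          congr 1
          ext x
          simp only [h, Q, Pi.add_apply, add_sub_cancel_right]
          rw [integral_mul_const]
      _ = ∫ ξ, ∫ x, Q (ξ, x + L ξ) :=
          (integral_integral_swap (f := fun ξ x => Q (ξ, x + L ξ))
            (integrable_shear hL.measurable hQ)).symm
      _ = ∫ ξ, ∫ x, Q (ξ, x) := by
          congr 1
          ext ξ
          exact integral_add_right_eq_self (fun x => Q (ξ, x)) (L ξ)
      _ = ∫ ξ, (∫ u, g u * cexp (I * ∑ i, (t (Fin.castAdd q i) : ℂ) * u i)) *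
            ∫ v, k (Fin.append ξ v) := by
          congr 1
          ext ξ
          rw [← integral_append_mul]
          congr 1
          ext x
          simp only [Q, R, k, L, Fin.sum_univ_add, Fin.append_left, Fin.append_right,
            Pi.zero_apply, Complex.ofReal_sub, mul_sub, Finset.sum_sub_distrib,
            Complex.ofReal_zero, mul_zero, Finset.sum_const_zero, add_zero]
          have e : cexp (I * (∑ i : Fin p, (t (Fin.castAdd q i) : ℂ) * x (Fin.castAdd q i) +
              ∑ i : Fin q, (t (Fin.natAdd p i) : ℂ) * x (Fin.natAdd p i)) -
              I * ∑ i : Fin p, (t (Fin.castAdd q i) : ℂ) * ξ i.castSucc) =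
              cexp (I * ∑ i : Fin p, (t (Fin.castAdd q i) : ℂ) * x (Fin.castAdd q i)) *
              cexp (I * ∑ i : Fin q, (t (Fin.natAdd p i) : ℂ) * x (Fin.natAdd p i) -
                I * ∑ i : Fin p, (t (Fin.castAdd q i) : ℂ) * ξ i.castSucc) := by
            rw [← Complex.exp_add]
            ring_nf
          rw [e]
          ring
      _ = _ := by rw [integral_const_mul, integral_append hk]
  have key := integral_integral_mul_cexp_eq hh hhc.continuousAt
    (by rw [funext hhat]; exact hInt)
  rw [funext hhat] at key
  rw [key]
  congr 1
  simp only [h, R, L, zero_add, Fin.append_left, Fin.append_right, Pi.zero_apply]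
  rfl

theorem prod_range_le_blocks {b : ℕ → ℝ} (h0 : ∀ r, 0 ≤ b r) (h1 : ∀ r, b r ≤ 1) (p q : ℕ) :
    ∏ r ∈ Finset.range (p + 2 + q), b r ≤
      ∏ i : Fin (p + q), b (if (i : ℕ) < p then (i : ℕ) else i + 2) := by
  rw [Finset.prod_range_add, Finset.prod_range_add, Fin.prod_univ_add]
  have e1 : ∏ i : Fin p, b (if ((Fin.castAdd q i : Fin (p + q)) : ℕ) < p
      then ((Fin.castAdd q i : Fin (p + q)) : ℕ) else (Fin.castAdd q i : Fin (p + q)) + 2) =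
      ∏ r ∈ Finset.range p, b r := by
    rw [← Fin.prod_univ_eq_prod_range]
    exact Finset.prod_congr rfl fun i _ => by simp
  have e2 : ∏ i : Fin q, b (if ((Fin.natAdd p i : Fin (p + q)) : ℕ) < p
      then ((Fin.natAdd p i : Fin (p + q)) : ℕ) else (Fin.natAdd p i : Fin (p + q)) + 2) =
      ∏ r ∈ Finset.range q, b (p + 2 + r) := by
    rw [← Fin.prod_univ_eq_prod_range (fun r => b (p + 2 + r))]
    exact Finset.prod_congr rfl fun i _ => by simp [add_right_comm]
  rw [e1, e2]
  refine mul_le_mul_of_nonneg_right ?_ (Finset.prod_nonneg fun _ _ => h0 _)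
  exact mul_le_of_le_one_right (Finset.prod_nonneg fun _ _ => h0 _)
    (Finset.prod_le_one (fun _ _ => h0 _) fun _ _ => h1 _)

theorem exists_integrable_norm_Ufun_le (p q : ℕ) (a : ℕ → ℂ) (ha : ∀ j < p + q + 2, (a j).re = 0)
    (s τ : ℂ) (c : ℕ → ℝ)
    (hc : ∀ j < p + q + 1, 0 < ((if j < p then ((j + 1 : ℕ) : ℂ) * s - (c j : ℂ)
      else if j = p then τ else (c (j - 1) : ℂ)) : ℂ).re) :
    ∃ H : (Fin (p + q) → ℝ) → ℝ, Integrable H ∧ ∀ t : Fin (p + q) → ℝ,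
      ‖Ufun (p + q + 2) a fun j =>
        if j < p then ((j + 1 : ℕ) : ℂ) * s - ((c j : ℂ) + (extR0 t j : ℝ) * I)
        else if j = p then τ else (c (j - 1) : ℂ) + (extR0 t (j - 1) : ℝ) * I‖ ≤ H t := by
  obtain ⟨C, d, hC, h⟩ := exists_norm_mellin_logWhitt_le (p + q) a ha (fun j => hc j j.2)
  let S : (Fin (p + q) → ℝ) → ℕ → ℂ := fun t j =>
    if j < p then ((j + 1 : ℕ) : ℂ) * s - ((c j : ℂ) + (extR0 t j : ℝ) * I)
    else if j = p then τ
    else if j < p + q + 1 then (c (j - 1) : ℂ) + (extR0 t (j - 1) : ℝ) * I else 0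
  have hSre : ∀ t, ∀ j : Fin (p + q + 1), (S t j).re =
      ((if (j : ℕ) < p then ((j + 1 : ℕ) : ℂ) * s - (c j : ℂ)
      else if (j : ℕ) = p then τ else (c (j - 1) : ℂ)) : ℂ).re := fun t j => by
    simp only [S, j.2, if_true]
    split_ifs <;> simp
  have hSlast : ∀ t, S t (p + q + 1) = 0 := fun t => by
    simp only [S]
    rw [if_neg (by omega), if_neg (by omega), if_neg (by omega)]
  have hSim : ∀ t j, (S t j).im = (S 0 j).im +
      if j < p then -extR0 t j else if j = p then 0 else extR0 t (j - 1) := fun t j => by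
    have h0 : ∀ i, extR0 (0 : Fin (p + q) → ℝ) i = 0 := fun i => by simp [extR0]
    simp only [S, h0]
    split_ifs with h1 h2 h3
    · simp [sub_eq_add_neg]
    · simp
    · simp
    · simp [extR0, show ¬ j - 1 < p + q by omega]
  let B : (Fin (p + q) → ℝ) → ℕ → ℝ := fun t r =>
    (1 + (d r + ((S t r).im - if r = 0 then 0 else (S t (r - 1)).im) / 2) ^ 2)⁻¹
  have hB0 : ∀ t r, 0 ≤ B t r := fun t r => by positivity
  have hB1 : ∀ t r, B t r ≤ 1 := fun t r =>
    inv_le_one_of_one_le₀ (le_add_of_nonneg_right (sq_nonneg _))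
  let σ : ℕ → ℕ := fun i => if i < p then i else i + 2
  let e : ℕ → ℝ := fun i =>
    d (σ i) + ((S 0 (σ i)).im - if σ i = 0 then 0 else (S 0 (σ i - 1)).im) / 2
  have hBe : ∀ t, ∀ i : Fin (p + q),
      B t (if (i : ℕ) < p then (i : ℕ) else i + 2) =
        (1 + (e i + blockDiff p q t i / 2) ^ 2)⁻¹ := fun t i => by
    rw [blockDiff_apply, ← extR0_coe t i]
    simp only [B, e, σ]
    obtain ⟨i, hi⟩ := i
    simp only
    by_cases hp : i < p
    · simp only [hp, if_true]
      by_cases h0 : i = 0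
      · subst h0
        simp only [if_true]
        rw [hSim t 0, if_pos hp]
        ring_nf
      · simp only [h0, if_false]
        rw [hSim t i, hSim t (i - 1), if_pos hp, if_pos (by omega)]
        ring_nf
    · simp only [hp, if_false, Nat.add_eq_zero_iff, OfNat.ofNat_ne_zero, and_false]
      rw [hSim t (i + 2), hSim t (i + 2 - 1), if_neg (by omega), if_neg (by omega),
        if_neg (by omega), if_neg (by omega), show i + 2 - 1 - 1 = i by omega,
        show i + 2 - 1 = i + 1 by omega]
      ring_nf
  have hG : Integrable fun t : Fin (p + q) → ℝ => ∏ i : Fin (p + q), (1 + (e i + t i / 2) ^ 2)⁻¹ :=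
    Integrable.fintype_prod fun i : Fin (p + q) => integrable_inv_one_add_sq_shift (e i)
  refine ⟨fun t => C * ∏ i : Fin (p + q), (1 + (e i + blockDiff p q t i / 2) ^ 2)⁻¹,
    (integrable_comp_injective _ (blockDiff_injective p q) hG).const_mul C, fun t => ?_⟩
  rw [show p + q + 2 = (p + q + 1) + 1 from rfl, Ufun_eq_integral_logWhitt]
  have e1 : ∀ x : Fin (p + q + 1) → ℝ, ∑ j : Fin (p + q + 1),
      (if (j : ℕ) < p then (((j : ℕ) + 1 : ℕ) : ℂ) * s - ((c j : ℂ) + (extR0 t j : ℝ) * I)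
        else if (j : ℕ) = p then τ else (c (j - 1) : ℂ) + (extR0 t (j - 1) : ℝ) * I) * x j =
      ∑ j : Fin (p + q + 1), S t j * x j := fun x =>
    Finset.sum_congr rfl fun j _ => by simp only [S, j.2, if_true]
  simp only [e1]
  refine (h (S t) (hSre t) (hSlast t)).trans (mul_le_mul_of_nonneg_left ?_ hC)
  have e2 : (1 + (d 0 + (S t 0).im / 2) ^ 2)⁻¹ * ∏ j ∈ Finset.range (p + q + 1),
      (1 + (d (j + 1) + ((S t (j + 1)).im - (S t j).im) / 2) ^ 2)⁻¹ =
      ∏ r ∈ Finset.range (p + 2 + q), B t r := by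
    rw [show p + 2 + q = p + q + 1 + 1 by omega, Finset.prod_range_succ' (B t), mul_comm]
    simp only [B, if_true, sub_zero, Nat.succ_ne_zero, if_false, Nat.add_sub_cancel]
  rw [e2]
  refine (prod_range_le_blocks (hB0 t) (hB1 t) p q).trans (le_of_eq ?_)
  exact Finset.prod_congr rfl fun i _ => hBe t i

theorem integral_Ufun_mul_Ufun_eq (p q : ℕ) (a a' : ℕ → ℂ) (ha : ∀ j < p + 1 + q + 1, (a j).re = 0)
    (ha' : ∀ j < p + 1, (a' j).re = 0) (s τ : ℂ) (c : ℕ → ℝ) (hc1 : ∀ j < p, 0 < c j)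
    (hc2 : ∀ j < p + 1 + q, 0 < ((if j < p then ((j + 1 : ℕ) : ℂ) * s - (c j : ℂ)
      else if j = p then τ else (c (j - 1) : ℂ)) : ℂ).re) :
    ∫ t : Fin (p + q) → ℝ,
      (Ufun (p + 1 + q + 1) a fun j =>
        if j < p then ((j + 1 : ℕ) : ℂ) * s - ((c j : ℂ) + (extR0 t j : ℝ) * I)
        else if j = p then τ else (c (j - 1) : ℂ) + (extR0 t (j - 1) : ℝ) * I) *
      Ufun (p + 1) a' (fun i => (c i : ℂ) + (extR0 t i : ℝ) * I) =
    (2 * Real.pi : ℂ) ^ (p + q) * ∫ x : Fin (p + 1) → ℝ,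
      logWhitt (p + 1 + q) a (fun j => extR0 x j) * logWhitt p a' (fun j => x j.castSucc) *
        cexp (τ * x (Fin.last p) + ∑ j : Fin p, ((j + 1 : ℕ) : ℂ) * s * x j.castSucc) := by
  let S₀ : ℕ → ℂ := fun j => if j < p then ((j + 1 : ℕ) : ℂ) * s - (c j : ℂ)
      else if j = p then τ else (c (j - 1) : ℂ)
  have hS₀ : ∀ j : Fin (p + 1 + q), 0 < (S₀ j).re := fun j => hc2 j j.2
  have hT₀ : ∀ j : Fin p, 0 < ((c j : ℂ)).re := fun j => hc1 j j.2
  have hΨ := whitBound_logWhitt (p + 1 + q) a ha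
  have hΨc := continuous_logWhitt (p + 1 + q) a ha
  have hΦ := whitBound_logWhitt p a' ha'
  have hΦc := continuous_logWhitt p a' ha'
  let f : (Fin (p + 1 + q) → ℝ) → ℂ := fun y =>
    logWhitt (p + 1 + q) a y * cexp (∑ j : Fin (p + 1 + q), S₀ j * y j)
  let g : (Fin p → ℝ) → ℂ := fun u => logWhitt p a' u * cexp (∑ j : Fin p, (c j : ℂ) * u j)
  have hfc : Continuous f := by fun_prop
  have hgc : Continuous g := by fun_prop
  obtain ⟨C, hC, hf⟩ := hΨ.exists_norm_mul_cexp_le hS₀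
  obtain ⟨D, hD, hg⟩ := hΦ.exists_norm_mul_cexp_le hT₀
  have hfi : Integrable f := hΨ.integrable_mul_cexp hΨc hS₀
  have hgi : Integrable g := hΦ.integrable_mul_cexp hΦc hT₀
  have hG : ∀ t : Fin (p + q) → ℝ, Ufun (p + 1) a' (fun i => (c i : ℂ) + (extR0 t i : ℝ) * I) =
      ∫ u, g u * cexp (I * ∑ i, (t (Fin.castAdd q i) : ℂ) * u i) := fun t => by
    rw [Ufun_eq_integral_logWhitt]
    congr 1
    ext u
    simp only [g]
    rw [mul_assoc, ← Complex.exp_add, Finset.mul_sum, ← Finset.sum_add_distrib]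
    congr 2
    refine Finset.sum_congr rfl fun i _ => ?_
    rw [← extR0_coe t (Fin.castAdd q i), Fin.val_castAdd]
    ring
  have hF : ∀ t : Fin (p + q) → ℝ, (Ufun (p + 1 + q + 1) a fun j =>
        if j < p then ((j + 1 : ℕ) : ℂ) * s - ((c j : ℂ) + (extR0 t j : ℝ) * I)
        else if j = p then τ else (c (j - 1) : ℂ) + (extR0 t (j - 1) : ℝ) * I) =
      ∫ y, f y * cexp (I * (∑ i : Fin q, (t (Fin.natAdd p i) : ℂ) * y (Fin.natAdd (p + 1) i) -
          ∑ i : Fin p, (t (Fin.castAdd q i) : ℂ) * y (Fin.castAdd q i.castSucc))) := fun t => by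
    rw [Ufun_eq_integral_logWhitt]
    congr 1
    ext y
    simp only [f]
    rw [mul_assoc, ← Complex.exp_add, mul_sub, Finset.mul_sum, Finset.mul_sum]
    congr 2
    have e1 : ∀ i : Fin q, p + 1 + (i : ℕ) - 1 = p + i := fun i => by omega
    have e2 : ∀ i : Fin q, ¬ p + 1 + (i : ℕ) < p := fun i => by omega
    have e3 : ∀ i : Fin q, ¬ p + 1 + (i : ℕ) = p := fun i => by omega
    simp only [Fin.sum_univ_add (b := q), Fin.sum_univ_castSucc (n := p), S₀, Fin.val_castAdd,
      Fin.val_natAdd, Fin.val_castSucc, Fin.val_last, lt_irrefl, if_false, if_true, Fin.is_lt,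
      e1, e2, e3]
    have e4 : ∀ i : Fin q, extR0 t (p + i) = t (Fin.natAdd p i) := fun i =>
      extR0_coe t (Fin.natAdd p i)
    have e5 : ∀ i : Fin p, extR0 t i = t (Fin.castAdd q i) := fun i =>
      extR0_coe t (Fin.castAdd q i)
    simp only [e4, e5, sub_mul, add_mul, Finset.sum_sub_distrib, Finset.sum_add_distrib,
      mul_comm I, mul_right_comm _ _ I]
    ring
  have hInt : Integrable fun t : Fin (p + q) → ℝ =>
      (∫ u, g u * cexp (I * ∑ i, (t (Fin.castAdd q i) : ℂ) * u i)) *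
        ∫ y, f y * cexp (I * (∑ i : Fin q, (t (Fin.natAdd p i) : ℂ) * y (Fin.natAdd (p + 1) i) -
          ∑ i : Fin p, (t (Fin.castAdd q i) : ℂ) * y (Fin.castAdd q i.castSucc))) := by
    obtain ⟨H, hH, hle⟩ := exists_integrable_norm_Ufun_le p q a (fun j hj => ha j (by omega)) s τ c
      fun j hj => hc2 j (by omega)
    have c1 := continuous_integral_mul_cexp hgi
      (φ := fun (t : Fin (p + q) → ℝ) (u : Fin p → ℝ) => ∑ i, t (Fin.castAdd q i) * u i)
      (by fun_prop)
    have c2 := continuous_integral_mul_cexp hfi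
      (φ := fun (t : Fin (p + q) → ℝ) (y : Fin (p + 1 + q) → ℝ) =>
        ∑ i : Fin q, t (Fin.natAdd p i) * y (Fin.natAdd (p + 1) i) -
          ∑ i : Fin p, t (Fin.castAdd q i) * y (Fin.castAdd q i.castSucc)) (by fun_prop)
    push_cast at c1 c2
    refine (hH.const_mul (∫ u, ‖g u‖)).mono' (c1.mul c2).aestronglyMeasurable
      (Filter.Eventually.of_forall fun t => ?_)
    rw [norm_mul]
    refine mul_le_mul ?_ ?_ (norm_nonneg _) (integral_nonneg fun _ => norm_nonneg _)
    · refine (norm_integral_le_integral_norm _).trans (le_of_eq ?_)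
      congr 1
      ext u
      rw [norm_mul, Complex.norm_exp]
      simp
    · rw [← hF t, show p + 1 + q + 1 = p + q + 2 by omega]
      exact hle t
  have key := integral_mul_eq_of_convolution hfc hgc hC hD (fun j => half_pos (hS₀ j))
    (fun j => half_pos (hT₀ j)) hf hg hInt
  simp only [hF, hG]
  simp only [mul_comm (∫ y, f y * _)]
  rw [key]
  congr 1
  refine integral_congr_ae (Filter.Eventually.of_forall fun ξ => ?_)
  have e : Fin.append ξ (0 : Fin q → ℝ) = fun j : Fin (p + 1 + q) => extR0 ξ j := by
    ext j
    refine Fin.addCases (fun i => ?_) (fun i => ?_) j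
    · rw [Fin.append_left, Fin.val_castAdd, extR0_coe]
    · rw [Fin.append_right, Fin.val_natAdd, extR0, dif_neg (by omega), Pi.zero_apply]
  simp only [f, g]
  rw [← e, mul_mul_mul_comm, ← Complex.exp_add]
  congr 2
  simp only [Fin.sum_univ_add (b := q), Fin.sum_univ_castSucc (n := p), Fin.append_left,
    Fin.append_right, Pi.zero_apply, Complex.ofReal_zero, mul_zero, Finset.sum_const_zero,
    S₀, Fin.val_castAdd, Fin.val_castSucc, Fin.val_last, lt_irrefl, if_false, if_true, Fin.is_lt,
    sub_mul, Finset.sum_sub_distrib]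
  ring

/-- Barnes integral expression for the archimedean `GL_n × GL_m` zeta integral
(Proposition 2.1(2) of Ishii–Stade).  The `n-2` integration variables are
ordered as `s_1,…,s_{m-1},s_{m+1},…,s_{n-1}`. -/
theorem gl_glm_zeta_barnes (n m : ℕ) (hn : 2 ≤ n) (hm1 : 1 ≤ m) (hm2 : m ≤ n - 1)
    (a a' : ℕ → ℂ) (ha : ∀ j < n, (a j).re = 0) (ha' : ∀ j < m, (a' j).re = 0)
    (s : ℂ) (hs : 0 < s.re) (c : ℕ → ℝ)
    (hc1 : ∀ j < m - 1, 0 < c j)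
    (hc2 : ∀ j < n - 1,
      0 < ((if j < m - 1 then ((j + 1 : ℕ) : ℂ) * s - (c j : ℂ)
            else if j = m - 1 then (m : ℂ) * s + sumA m a'
            else (c (j - 1) : ℂ)) : ℂ).re)
    (hc3 : ∀ j, m ≤ j → j < n - 1 → 0 < c (j - 1)) :
    zetaGLm n m a a' s =
      (2 : ℂ) ^ m / (2 * (Real.pi : ℂ) * Complex.I) ^ (n - 2) *
        VIntK (n - 2) c (fun z =>
          Ufun n a (fun j =>
              if j < m - 1 then ((j + 1 : ℕ) : ℂ) * s - z j
              else if j = m - 1 then (m : ℂ) * s + sumA m a'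
              else z (j - 1)) *
            Ufun m a' z) := by
  obtain ⟨p, rfl⟩ : ∃ p, m = p + 1 := ⟨m - 1, by omega⟩
  obtain ⟨q, rfl⟩ : ∃ q, n = p + 1 + q + 1 := ⟨n - (p + 2), by omega⟩
  have h2 : p + 1 + q + 1 - 2 = p + q := by omega
  simp only [Nat.add_sub_cancel] at hc1 hc2 ⊢
  rw [h2, zetaGLm_eq_integral_logWhitt p (p + 1 + q) (by omega)]
  simp only [VIntK]
  rw [integral_Ufun_mul_Ufun_eq p q a a' ha ha' s _ c hc1 hc2]
  have hpi : (Real.pi : ℂ) ≠ 0 := Complex.ofReal_ne_zero.2 Real.pi_ne_zero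
  have e : ∀ x : Fin (p + 1) → ℝ, sumA (p + 1) a' * x (Fin.last p) +
      ∑ j : Fin (p + 1), ((j + 1 : ℕ) : ℂ) * s * x j =
      (((p + 1 : ℕ) : ℂ) * s + sumA (p + 1) a') * x (Fin.last p) +
        ∑ j : Fin p, ((j + 1 : ℕ) : ℂ) * s * x j.castSucc := fun x => by
    rw [Fin.sum_univ_castSucc]
    simp only [Fin.val_castSucc, Fin.val_last]
    ring
  simp only [e]
  rw [mul_pow (2 * (Real.pi : ℂ)) I]
  have hI := pow_ne_zero (p + q) Complex.I_ne_zero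
  have hP := pow_ne_zero (p + q) (mul_ne_zero (two_ne_zero' ℂ) hpi)
  generalize (∫ x : Fin (p + 1) → ℝ, _ : ℂ) = J
  field_simp

end
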